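/- arXiv:1506.03155 — 2 statements merged into one kernel-verified Lean document; each statement's English description precedes it below -/
import Mathlib

section
/- Let Δ_1, …, Δ_k be integral convex polytopes in ℝ^n and let f : ℝ^n → ℝ be a polynomial of degree d. Then the function Φ(m_1, …, m_k) = Σ_{x ∈ ℤ^n} f(x) · (χ_{Δ_1}^{m_1} * ⋯ * χ_{Δ_k}^{m_k})(x), defined for all (m_1,…,m_k) ∈ ℤ^k (using inverses of the χ_{Δ_i} in the ring of convex chains for negative exponents), agrees with the restriction to ℤ^k of a polynomial on ℝ^k of degree at most n + d. In particular, for nonnegative m_i, Φ(m_1,…,m_k) = Σ_{x ∈ (m_1Δ_1+⋯+m_kΔ_k) ∩ ℤ^n} f(x). -/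
open Pointwise

/-- An integral (lattice) polytope: the convex hull of a nonempty finite set of points of
`ℤⁿ ⊆ ℝⁿ`. -/
def IsLatticePolytope {n : ℕ} (P : Set (Fin n → ℝ)) : Prop :=
  ∃ s : Finset (Fin n → ℤ), s.Nonempty ∧ P = convexHull ℝ ↑(s.image fun v i => (v i : ℝ))

/-- The additive group `Z(ℤⁿ)` of integral convex chains. -/
def intChainGroup (n : ℕ) : AddSubgroup ((Fin n → ℝ) → ℤ) :=
  AddSubgroup.closure
    {f | ∃ P, IsLatticePolytope P ∧ f = Set.indicator P (1 : (Fin n → ℝ) → ℤ)}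

open Filter Topology Asymptotics

/-!
A linear relation among indicators of compact convex sets persists after taking images under a
linear map, since the Euler characteristic of every fibre is additive. The inclusion–exclusion
relation `∏ i, (χ_σ - χ_{e i}) = 0` for the standard simplex `σ` with vertices `e i` thus yields
`∏ a, (χ_Δ - χ_{a}) = 0` for every polytope `Δ`, where `a` runs through the vertices of `Δ`.

Let `I` be the largest ideal on which the functional `r ↦ ∑ x, f(x) r(x)` vanishes. Multiplication
by `χ_{v} - 1` acts on the functional by differencing `f` in direction `v`, so `χ_{v}` is unipotent
modulo `I`; hence so is `χ_Δ`, by the product relation. Powers `(1 + ε) ^ m` with `ε` nilpotent are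
polynomial in `m ∈ ℤ`, and the degree of the resulting polynomial is bounded by the growth of sums
of `f` over the lattice points of the dilates of a polytope.
-/

section EulerCharacteristic

variable {ι M : Type*} [AddCommGroup M]

theorem eventually_nhdsGT_mem_iff {α : Type*} [LinearOrder α] [TopologicalSpace α]
    [OrderTopology α] {K : Set α} (hK : IsClosed K) (hc : K.OrdConnected) (b : α) :
    ∀ᶠ y in 𝓝[>] b, (y ∈ K ↔ b ∈ K ∧ ¬ IsGreatest K b) := by
  by_cases hb : b ∈ K
  · by_cases hg : IsGreatest K b
    · filter_upwards [self_mem_nhdsWithin] with y hy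
      simpa [hg] using fun hyK ↦ (hg.2 hyK).not_gt hy
    · obtain ⟨z, hz, hbz⟩ : ∃ z ∈ K, b < z := by
        simpa [IsGreatest, hb, mem_upperBounds] using hg
      filter_upwards [Ioo_mem_nhdsGT hbz] with y hy
      simpa [hb, hg] using hc.out hb hz ⟨hy.1.le, hy.2.le⟩
  · filter_upwards [nhdsWithin_le_nhds (hK.isOpen_compl.mem_nhds hb)] with y hy
    simpa [hb] using hy

open scoped Classical in
theorem sum_filter_isGreatest_eq_zero {α : Type*} [LinearOrder α] [TopologicalSpace α]
    [OrderTopology α] [DenselyOrdered α] [NoMaxOrder α] {s : Finset ι} {c : ι → M} {K : ι → Set α}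
    (hK : ∀ i ∈ s, IsClosed (K i)) (hc : ∀ i ∈ s, (K i).OrdConnected)
    (h : ∀ x, ∑ i ∈ s with x ∈ K i, c i = 0) (b : α) :
    ∑ i ∈ s with IsGreatest (K i) b, c i = 0 := by
  obtain ⟨y, hy⟩ := ((Filter.eventually_all_finset s).2 fun i hi ↦
    eventually_nhdsGT_mem_iff (hK i hi) (hc i hi) b).exists
  -- From `b` to `y`, the relation loses exactly the terms whose interval ends at `b`.
  have hsplit := Finset.sum_filter_add_sum_filter_not (s.filter (b ∈ K ·))
    (fun i ↦ IsGreatest (K i) b) c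
  have hy' : ∑ i ∈ s with b ∈ K i ∧ ¬ IsGreatest (K i) b, c i = 0 := by
    rw [← h y]
    exact congrArg (Finset.sum · c) (Finset.filter_congr fun i hi ↦ (hy i hi).symm)
  rw [Finset.filter_filter, Finset.filter_filter, hy', h, add_zero] at hsplit
  rw [← hsplit]
  exact congrArg (Finset.sum · c) (Finset.filter_congr fun i _ ↦
    ⟨fun hg ↦ ⟨hg.1, hg⟩, And.right⟩)

open scoped Classical in
theorem sum_filter_nonempty_eq_zero_of_ordConnected {α : Type*} [ConditionallyCompleteLinearOrder α]
    [TopologicalSpace α] [OrderTopology α] [DenselyOrdered α] [NoMaxOrder α]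
    {s : Finset ι} {c : ι → M} {K : ι → Set α}
    (hK : ∀ i ∈ s, IsCompact (K i)) (hc : ∀ i ∈ s, (K i).OrdConnected)
    (h : ∀ x, ∑ i ∈ s with x ∈ K i, c i = 0) :
    ∑ i ∈ s with (K i).Nonempty, c i = 0 := by
  rw [← Finset.sum_fiberwise_of_maps_to (g := fun i ↦ sSup (K i))
    (fun i hi ↦ Finset.mem_image_of_mem (fun i ↦ sSup (K i)) hi)]
  refine Finset.sum_eq_zero fun b _ ↦ ?_
  rw [← sum_filter_isGreatest_eq_zero (fun i hi ↦ (hK i hi).isClosed) hc h b,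
    Finset.filter_filter]
  refine congrArg (Finset.sum · c) (Finset.filter_congr fun i hi ↦
    ⟨?_, fun hb ↦ ⟨hb.nonempty, hb.csSup_eq⟩⟩)
  rintro ⟨hne, rfl⟩
  exact (hK i hi).isGreatest_sSup hne

open scoped Classical in
theorem sum_filter_nonempty_eq_zero_of_fin {N : ℕ} {s : Finset ι} {c : ι → M}
    {K : ι → Set (Fin N → ℝ)} (hK : ∀ i ∈ s, IsCompact (K i)) (hc : ∀ i ∈ s, Convex ℝ (K i))
    (h : ∀ x, ∑ i ∈ s with x ∈ K i, c i = 0) :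
    ∑ i ∈ s with (K i).Nonempty, c i = 0 := by
  induction N with
  | zero => simpa only [Set.Nonempty, Unique.exists_iff] using h _
  | succ N ih =>
    let π : (Fin (N + 1) → ℝ) →ₗ[ℝ] Fin N → ℝ := LinearMap.funLeft ℝ ℝ Fin.succ
    have hπ : Continuous π := π.continuous_of_finiteDimensional
    suffices ∀ y, ∑ i ∈ s with y ∈ π '' K i, c i = 0 by
      simpa only [Set.image_nonempty] using ih (fun i hi ↦ (hK i hi).image hπ)
        (fun i hi ↦ (hc i hi).linear_image π) this
    intro y
    let line : ℝ →ᵃ[ℝ] Fin (N + 1) → ℝ := AffineMap.lineMap (Fin.cons 0 y) (Fin.cons 1 y)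
    have hline (t : ℝ) : line t = Fin.cons t y := by
      ext j
      refine Fin.cases ?_ (fun j ↦ ?_) j <;> simp [line, AffineMap.lineMap_apply]
    have hemb : IsClosedEmbedding line :=
      Function.LeftInverse.isClosedEmbedding (f := fun x ↦ x 0) (fun t ↦ by simp [hline])
        (continuous_apply 0) AffineMap.lineMap_continuous
    have hfib (i : ι) : (line ⁻¹' K i).Nonempty ↔ y ∈ π '' K i := by
      constructor
      · rintro ⟨t, ht⟩
        exact ⟨line t, ht, by ext j; simp [hline, π, LinearMap.funLeft_apply]⟩
      · rintro ⟨x, hx, rfl⟩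
        have hx' : Fin.cons (x 0) (π x) = x := Fin.cons_self_tail x
        exact ⟨x 0, by simpa only [Set.mem_preimage, hline, hx'] using hx⟩
    simpa only [hfib] using sum_filter_nonempty_eq_zero_of_ordConnected
      (fun i hi ↦ hemb.isCompact_preimage (hK i hi))
      (fun i hi ↦ ((hc i hi).affine_preimage line).ordConnected) fun t ↦ h (line t)

variable {E : Type*} [AddCommGroup E] [Module ℝ E] [TopologicalSpace E] [IsTopologicalAddGroup E]
  [ContinuousSMul ℝ E] [T2Space E] [FiniteDimensional ℝ E]
  {s : Finset ι} {c : ι → M} {K : ι → Set E}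

open scoped Classical in
theorem sum_filter_nonempty_eq_zero (hK : ∀ i ∈ s, IsCompact (K i))
    (hc : ∀ i ∈ s, Convex ℝ (K i)) (h : ∀ x, ∑ i ∈ s with x ∈ K i, c i = 0) :
    ∑ i ∈ s with (K i).Nonempty, c i = 0 := by
  let φ : E ≃L[ℝ] Fin (Module.finrank ℝ E) → ℝ := .ofFinrankEq (by simp)
  have hφ (i : ι) (y) : y ∈ φ '' K i ↔ φ.symm y ∈ K i := by
    rw [φ.image_eq_preimage_symm, Set.mem_preimage]
  simpa only [Set.image_nonempty] using
    sum_filter_nonempty_eq_zero_of_fin (K := fun i ↦ φ '' K i)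
      (fun i hi ↦ (hK i hi).image φ.continuous)
      (fun i hi ↦ (hc i hi).linear_image φ.toLinearMap)
      fun y ↦ by simpa only [hφ] using h (φ.symm y)

open scoped Classical in
theorem sum_filter_mem_image_eq_zero {F : Type*} [AddCommGroup F] [Module ℝ F] (L : E →ₗ[ℝ] F)
    (hK : ∀ i ∈ s, IsCompact (K i)) (hc : ∀ i ∈ s, Convex ℝ (K i))
    (h : ∀ x, ∑ i ∈ s with x ∈ K i, c i = 0) (y : F) :
    ∑ i ∈ s with y ∈ L '' K i, c i = 0 := by
  have hclosed : IsClosed (L ⁻¹' {y}) := by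
    by_cases hy : y ∈ Set.range L
    · obtain ⟨x, rfl⟩ := hy
      have hker : L ⁻¹' {L x} = (· - x) ⁻¹' (LinearMap.ker L : Set E) := by
        ext; simp [sub_eq_zero]
      rw [hker]
      exact (Submodule.closed_of_finiteDimensional _).preimage (continuous_sub_right x)
    · simp [Set.preimage_singleton_eq_empty.2 hy]
  have hfib (i : ι) : (K i ∩ L ⁻¹' {y}).Nonempty ↔ y ∈ L '' K i := Iff.rfl
  simp only [← hfib]
  refine sum_filter_nonempty_eq_zero (fun i hi ↦ (hK i hi).inter_right hclosed)
    (fun i hi ↦ (hc i hi).inter ((convex_singleton y).linear_preimage L)) fun x ↦ ?_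
  by_cases hx : L x = y
  · simpa [hx] using h x
  · simp [hx]

end EulerCharacteristic

section SimplexIdentity

open Finset

variable {ι : Type*} [Fintype ι]

theorem mem_smul_stdSimplex [Nonempty ι] {r : ℝ} (hr : 0 ≤ r) {x : ι → ℝ} :
    x ∈ r • stdSimplex ℝ ι ↔ (∀ i, 0 ≤ x i) ∧ ∑ i, x i = r := by
  classical
  rcases hr.eq_or_lt with rfl | hr
  · have hne : (stdSimplex ℝ ι).Nonempty := ⟨_, single_mem_stdSimplex ℝ (Classical.arbitrary ι)⟩
    rw [Set.zero_smul_set hne, Set.mem_zero]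
    refine ⟨by rintro rfl; simp, fun ⟨h0, hsum⟩ ↦ funext fun i ↦ ?_⟩
    exact (sum_eq_zero_iff_of_nonneg fun i _ ↦ h0 i).1 hsum i (mem_univ i)
  · rw [Set.mem_smul_set_iff_inv_smul_mem₀ hr.ne']
    simp only [stdSimplex, Set.mem_ofPred_eq, Pi.smul_apply, smul_eq_mul, ← mul_sum,
      inv_mul_eq_one₀ hr.ne', eq_comm (a := r), mul_nonneg_iff_of_pos_left (inv_pos.2 hr)]

variable {F : Type*} [AddCommGroup F] [Module ℝ F]

theorem image_linearCombination_stdSimplex (a : ι → F) :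
    Fintype.linearCombination ℝ a '' stdSimplex ℝ ι = convexHull ℝ (Set.range a) := by
  classical
  rw [← convexHull_rangle_single_eq_stdSimplex, LinearMap.image_convexHull, ← Set.range_comp]
  congr 2
  ext i
  simp

variable [DecidableEq ι]

theorem mem_card_smul_stdSimplex_add_indicator [Nonempty ι] (S : Finset ι) {x : ι → ℝ} :
    x ∈ (#Sᶜ : ℝ) • stdSimplex ℝ ι + {(S : Set ι).indicator 1} ↔
      (∀ i, 0 ≤ x i) ∧ ∑ i, x i = Fintype.card ι ∧ ∀ i ∈ S, 1 ≤ x i := by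
  have hcard : (#Sᶜ : ℝ) + #S = Fintype.card ι := mod_cast card_compl_add_card S
  have hsum : ∑ i, (S : Set ι).indicator (1 : ι → ℝ) i = #S := by
    simp [Set.indicator_apply]
  rw [Set.add_singleton, Set.image_add_right, Set.mem_preimage, ← sub_eq_add_neg,
    mem_smul_stdSimplex (Nat.cast_nonneg _)]
  simp only [Pi.sub_apply, sum_sub_distrib, hsum, sub_eq_iff_eq_add, hcard, sub_nonneg]
  have hind : (∀ i, (S : Set ι).indicator (1 : ι → ℝ) i ≤ x i) ↔
      (∀ i, 0 ≤ x i) ∧ ∀ i ∈ S, 1 ≤ x i := by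
    simp only [← forall_and]
    refine forall_congr' fun i ↦ ?_
    by_cases hi : i ∈ S
    · simpa [hi] using zero_le_one.trans
    · simp [hi]
  rw [hind]
  tauto

open scoped Classical in
theorem sum_filter_mem_stdSimplex_neg_one_pow [Nonempty ι] (x : ι → ℝ) :
    ∑ S : Finset ι with x ∈ (#Sᶜ : ℝ) • stdSimplex ℝ ι + {(S : Set ι).indicator 1},
      (-1 : ℤ) ^ #S = 0 := by
  simp only [mem_card_smul_stdSimplex_add_indicator]
  by_cases hx : (∀ i, 0 ≤ x i) ∧ ∑ i, x i = Fintype.card ι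
  · have hne : ({i | 1 ≤ x i} : Finset ι).Nonempty := by
      by_contra! hempty
      have hlt (i : ι) : x i < 1 := by simpa using Finset.filter_eq_empty_iff.1 hempty (mem_univ i)
      exact (sum_lt_sum_of_nonempty univ_nonempty fun i _ ↦ hlt i).ne (by simp [hx.2])
    rw [← sum_powerset_neg_one_pow_card_of_nonempty hne]
    refine congrArg (Finset.sum · _) (Finset.ext fun S ↦ ?_)
    simp [hx, subset_iff]
  · simp [← and_assoc, hx]

open scoped Classical in
theorem sum_filter_mem_convexHull_range_neg_one_pow [Nonempty ι] (a : ι → F) (y : F) :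
    ∑ S : Finset ι with y ∈ (#Sᶜ : ℝ) • convexHull ℝ (Set.range a) + {∑ i ∈ S, a i},
      (-1 : ℤ) ^ #S = 0 := by
  have hpush := sum_filter_mem_image_eq_zero (Fintype.linearCombination ℝ a)
    (s := (univ : Finset (Finset ι))) (c := fun S ↦ (-1 : ℤ) ^ #S)
    (fun S _ ↦ ((isCompact_stdSimplex ℝ ι).smul (#Sᶜ : ℝ)).add
      (isCompact_singleton (x := (S : Set ι).indicator 1)))
    (fun S _ ↦ ((convex_stdSimplex ℝ ι).smul (#Sᶜ : ℝ)).add (convex_singleton _))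
    sum_filter_mem_stdSimplex_neg_one_pow y
  have hvertex (S : Finset ι) :
      Fintype.linearCombination ℝ a ((S : Set ι).indicator 1) = ∑ i ∈ S, a i := by
    simp [Fintype.linearCombination_apply, Set.indicator_apply, ite_smul, Finset.sum_ite_mem]
  simpa only [Set.image_add, image_smul_set, Set.image_singleton, hvertex,
    image_linearCombination_stdSimplex] using hpush

end SimplexIdentity

section PolynomialGrowth

open Finset MvPolynomial
open scoped Polynomial

variable {σ R : Type*} [CommRing R]

/-- The restriction of the polynomial `f` to the line through `x` with direction `v`, as a
polynomial in the parameter `t` of the point `x + t • v`. -/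
noncomputable def lineRestriction (f : MvPolynomial σ R) (x v : σ → R) : R[X] :=
  aeval (fun i ↦ Polynomial.C (x i) + Polynomial.C (v i) * Polynomial.X) f

theorem eval_lineRestriction (f : MvPolynomial σ R) (x v : σ → R) (t : R) :
    (lineRestriction f x v).eval t = eval (x + t • v) f := by
  rw [lineRestriction, ← Polynomial.coe_aeval_eq_eval, ← coe_aeval_eq_eval, AlgHom.coe_toRingHom,
    ← AlgHom.comp_apply, comp_aeval]
  refine congrArg (aeval · f) (funext fun i ↦ ?_)
  simp [mul_comm t]

theorem natDegree_lineRestriction_le (f : MvPolynomial σ R) (x v : σ → R) :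
    (lineRestriction f x v).natDegree ≤ f.totalDegree :=
  (aeval_natDegree_le f le_rfl _ fun i ↦ by compute_degree).trans_eq (mul_one _)

theorem coeff_lineRestriction_zero (f : MvPolynomial σ R) (v : σ → R) (j : ℕ) :
    (lineRestriction f 0 v).coeff j = eval v (homogeneousComponent j f) := by
  induction f using MvPolynomial.induction_on' with
  | monomial s c =>
    have hmon : lineRestriction (monomial s c) 0 v =
        Polynomial.C (eval v (monomial s c)) * Polynomial.X ^ s.degree := by
      simp [lineRestriction, aeval_monomial, eval_monomial, mul_pow, Finsupp.prod,
        prod_mul_distrib, prod_pow_eq_pow_sum, Finsupp.degree_apply, mul_assoc]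
    rw [hmon, Polynomial.coeff_C_mul_X_pow,
      homogeneousComponent_of_mem (isHomogeneous_monomial c rfl)]
    split_ifs <;> simp
  | add p q hp hq =>
    rw [map_add, map_add, ← hp, ← hq, lineRestriction, map_add, Polynomial.coeff_add]
    rfl

theorem fwdDiff_iter_eval_comp_eq_zero {A : Type*} [AddCommGroup A] (f : MvPolynomial σ R)
    (φ : A →+ (σ → R)) (v : A) :
    (fwdDiff v)^[f.totalDegree + 1] (fun x ↦ eval (φ x) f) = 0 := by
  funext x
  have hline := congrFun (Polynomial.fwdDiff_iter_eq_zero_of_degree_lt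
    (Nat.lt_succ_of_le (natDegree_lineRestriction_le f (φ x) (φ v)))) 0
  rw [fwdDiff_iter_eq_sum_shift] at hline ⊢
  simpa [eval_lineRestriction, Nat.cast_smul_eq_nsmul] using hline

theorem natDegree_le_of_isBigO {q : ℝ[X]} {D : ℕ}
    (h : (fun t : ℕ ↦ q.eval (t : ℝ)) =O[atTop] fun t : ℕ ↦ (t : ℝ) ^ D) : q.natDegree ≤ D := by
  by_contra! hlt
  have hdeg : (Polynomial.X ^ D : ℝ[X]).degree < q.degree := by
    rw [← Polynomial.natDegree_lt_natDegree_iff (Polynomial.monic_X_pow D).ne_zero]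
    simpa using hlt
  have ho : (fun t : ℕ ↦ (t : ℝ) ^ D) =o[atTop] fun t : ℕ ↦ q.eval (t : ℝ) := by
    simpa [Function.comp_def] using ((Polynomial.isLittleO_cobounded_of_degree_lt hdeg).mono
      IsOrderBornology.atTop_le_cobounded).comp_tendsto tendsto_natCast_atTop_atTop
  refine isLittleO_irrefl (Eventually.frequently ?_) (ho.trans_isBigO h)
  filter_upwards [eventually_ge_atTop 1] with t ht
  positivity

theorem totalDegree_le_of_homogeneousComponent_eq_zero {p : MvPolynomial σ R} {D : ℕ}
    (h : ∀ j, D < j → homogeneousComponent j p = 0) : p.totalDegree ≤ D := by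
  refine Finset.sup_le fun s hs ↦ ?_
  by_contra! hlt
  refine mem_support_iff.1 hs ?_
  have hs0 := congrArg (coeff s) (h _ hlt)
  rwa [coeff_homogeneousComponent, if_pos (by rfl), coeff_zero] at hs0

theorem totalDegree_le_of_isBigO {p : MvPolynomial σ ℝ} {D : ℕ}
    (h : ∀ m : σ → ℕ, (fun t : ℕ ↦ eval (fun i ↦ (t : ℝ) * m i) p) =O[atTop]
      fun t : ℕ ↦ (t : ℝ) ^ D) : p.totalDegree ≤ D := by
  refine totalDegree_le_of_homogeneousComponent_eq_zero fun j hj ↦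
    funext_set (fun _ ↦ Set.range (Nat.cast : ℕ → ℝ))
      (fun _ ↦ Set.infinite_range_of_injective Nat.cast_injective) fun x hx ↦ ?_
  choose m hm using fun i ↦ hx i (Set.mem_univ i)
  obtain rfl : (fun i ↦ (m i : ℝ)) = x := funext hm
  rw [map_zero, ← coeff_lineRestriction_zero]
  refine Polynomial.coeff_eq_zero_of_natDegree_lt ((natDegree_le_of_isBigO ?_).trans_lt hj)
  have hm' (t : ℕ) : (0 : σ → ℝ) + (t : ℝ) • (fun i ↦ (m i : ℝ)) = fun i ↦ (t : ℝ) * m i := by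
    ext; simp
  simpa only [eval_lineRestriction, hm'] using h m

theorem exists_abs_eval_le_mul_pow (f : MvPolynomial σ ℝ) :
    ∃ C, 0 ≤ C ∧ ∀ (B : ℝ) (x : σ → ℝ), 1 ≤ B → (∀ i, |x i| ≤ B) →
      |eval x f| ≤ C * B ^ f.totalDegree := by
  refine ⟨∑ s ∈ f.support, |f.coeff s|, sum_nonneg fun _ _ ↦ abs_nonneg _, fun B x hB hx ↦ ?_⟩
  rw [eval_eq, sum_mul]
  refine (abs_sum_le_sum_abs _ _).trans (sum_le_sum fun s hs ↦ ?_)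
  rw [abs_mul, abs_prod]
  gcongr
  calc ∏ i ∈ s.support, |x i ^ s i| ≤ ∏ i ∈ s.support, B ^ s i := by
        gcongr with i
        rw [abs_pow]
        gcongr
        exact hx i
    _ = B ^ s.degree := prod_pow_eq_pow_sum _ _ _
    _ ≤ B ^ f.totalDegree := pow_le_pow_right₀ hB (le_totalDegree hs)

end PolynomialGrowth

section LatticeSums

open Finset MvPolynomial

/-- The inclusion of the lattice `ℤ^σ` into `ℝ^σ`. -/
def latticeInclusion (σ : Type*) : (σ → ℤ) →+ (σ → ℝ) :=
  (Int.castAddHom ℝ).compLeft σ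

variable {σ : Type*}

@[simp]
theorem latticeInclusion_apply (x : σ → ℤ) (i : σ) : latticeInclusion σ x i = x i :=
  rfl

theorem preimage_latticeInclusion_subset_Icc {B : ℕ} {Q : Set (σ → ℝ)}
    (hQ : ∀ y ∈ Q, ∀ i, |y i| ≤ B) :
    latticeInclusion σ ⁻¹' Q ⊆ Set.Icc (fun _ ↦ -(B : ℤ)) (fun _ ↦ (B : ℤ)) := by
  intro x hx
  have hxB (i : σ) : |x i| ≤ (B : ℤ) := by
    simpa [← Int.cast_le (R := ℝ)] using hQ _ hx i
  simpa [Pi.le_def, ← forall_and, ← abs_le] using hxB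

theorem exists_nat_forall_abs_le [Finite σ] {Q : Set (σ → ℝ)} (hQ : Bornology.IsBounded Q) :
    ∃ B : ℕ, 1 ≤ B ∧ ∀ y ∈ Q, ∀ i, |y i| ≤ B := by
  cases nonempty_fintype σ
  obtain ⟨C, hC⟩ := isBounded_iff_forall_norm_le.1 hQ
  refine ⟨⌈C⌉₊ + 1, by simp, fun y hy i ↦ ?_⟩
  calc |y i| ≤ ‖y‖ := norm_le_pi_norm y i
    _ ≤ C := hC y hy
    _ ≤ (⌈C⌉₊ + 1 : ℕ) := (Nat.le_ceil C).trans (by simp)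

theorem finite_preimage_latticeInclusion [Finite σ] {Q : Set (σ → ℝ)}
    (hQ : Bornology.IsBounded Q) : (latticeInclusion σ ⁻¹' Q).Finite := by
  classical
  cases nonempty_fintype σ
  obtain ⟨B, -, hB⟩ := exists_nat_forall_abs_le hQ
  exact (Set.finite_Icc _ _).subset (preimage_latticeInclusion_subset_Icc hB)

theorem ncard_preimage_latticeInclusion_le [Fintype σ] {B : ℕ} (hB : 1 ≤ B) {Q : Set (σ → ℝ)}
    (hQ : ∀ y ∈ Q, ∀ i, |y i| ≤ B) :
    (latticeInclusion σ ⁻¹' Q).ncard ≤ (3 * B) ^ Fintype.card σ := by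
  classical
  calc (latticeInclusion σ ⁻¹' Q).ncard
      ≤ #(Finset.Icc (fun _ : σ ↦ -(B : ℤ)) (fun _ ↦ (B : ℤ))) := by
        rw [← Set.ncard_coe_finset, Finset.coe_Icc]
        exact Set.ncard_le_ncard (preimage_latticeInclusion_subset_Icc hQ) (Set.finite_Icc _ _)
    _ = ((B : ℤ) + 1 - -(B : ℤ)).toNat ^ Fintype.card σ := by
        simp only [Pi.card_Icc, Int.card_Icc, prod_const, card_univ]
    _ ≤ (3 * B) ^ Fintype.card σ := Nat.pow_le_pow_left (by omega) _

theorem exists_abs_finsum_eval_le [Fintype σ] (f : MvPolynomial σ ℝ) :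
    ∃ C, ∀ (B : ℕ) (Q : Set (σ → ℝ)), 1 ≤ B → (∀ y ∈ Q, ∀ i, |y i| ≤ B) →
      |∑ᶠ x ∈ latticeInclusion σ ⁻¹' Q, eval (latticeInclusion σ x) f| ≤
        C * (B : ℝ) ^ (Fintype.card σ + f.totalDegree) := by
  classical
  obtain ⟨C, hC0, hC⟩ := exists_abs_eval_le_mul_pow f
  refine ⟨3 ^ Fintype.card σ * C, fun B Q hB hQ ↦ ?_⟩
  have hfin : (latticeInclusion σ ⁻¹' Q).Finite :=
    (Set.finite_Icc _ _).subset (preimage_latticeInclusion_subset_Icc hQ)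
  have hcard : (#hfin.toFinset : ℝ) ≤ (3 * B) ^ Fintype.card σ := by
    rw [← Set.ncard_eq_toFinset_card _ hfin]
    exact_mod_cast ncard_preimage_latticeInclusion_le hB hQ
  rw [finsum_mem_eq_finite_toFinset_sum _ hfin]
  calc |∑ x ∈ hfin.toFinset, eval (latticeInclusion σ x) f|
      ≤ ∑ x ∈ hfin.toFinset, |eval (latticeInclusion σ x) f| := abs_sum_le_sum_abs _ _
    _ ≤ #hfin.toFinset • (C * (B : ℝ) ^ f.totalDegree) := sum_le_card_nsmul _ _ _ fun x hx ↦
        hC B _ (mod_cast hB) (hQ _ (hfin.mem_toFinset.1 hx))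
    _ ≤ (3 * B) ^ Fintype.card σ * (C * (B : ℝ) ^ f.totalDegree) := by
        rw [nsmul_eq_mul]
        gcongr
    _ = 3 ^ Fintype.card σ * C * (B : ℝ) ^ (Fintype.card σ + f.totalDegree) := by ring

theorem isBigO_finsum_eval_smul [Fintype σ] (f : MvPolynomial σ ℝ) {Q : Set (σ → ℝ)}
    (hQ : Bornology.IsBounded Q) :
    (fun t : ℕ ↦ ∑ᶠ x ∈ latticeInclusion σ ⁻¹' ((t : ℝ) • Q), eval (latticeInclusion σ x) f)
      =O[atTop] fun t : ℕ ↦ (t : ℝ) ^ (Fintype.card σ + f.totalDegree) := by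
  obtain ⟨B, hB, hQB⟩ := exists_nat_forall_abs_le hQ
  obtain ⟨C, hC⟩ := exists_abs_finsum_eval_le f
  refine IsBigO.of_bound (C * B ^ (Fintype.card σ + f.totalDegree)) ?_
  filter_upwards [eventually_ge_atTop 1] with t ht
  have hbox : ∀ y ∈ (t : ℝ) • Q, ∀ i, |y i| ≤ (t * B : ℕ) := by
    rintro _ ⟨y, hy, rfl⟩ i
    simpa [abs_mul] using mul_le_mul_of_nonneg_left (hQB y hy i) t.cast_nonneg
  have hsum := hC (t * B) _ (Nat.mul_pos ht hB) hbox
  rw [Nat.cast_mul, mul_pow, mul_comm (_ ^ _), ← mul_assoc] at hsum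
  simpa using hsum

end LatticeSums

section Unipotent

open Finset

theorem isNilpotent_sub_one_of_prod_sub_eq_zero {S κ : Type*} [CommRing S] {s : Finset κ} {u : S}
    {T : κ → S} (hT : ∀ i ∈ s, IsNilpotent (T i - 1)) (h : ∏ i ∈ s, (u - T i) = 0) :
    IsNilpotent (u - 1) := by
  refine nilpotent_iff_mem_prime.2 fun J hJ ↦ ?_
  obtain ⟨i, hi, hui⟩ := hJ.prod_mem_iff.1 (h ▸ J.zero_mem)
  simpa using J.add_mem hui (nilpotent_iff_mem_prime.1 (hT i hi) J hJ)

theorem sum_range_choose_add_one_zsmul_pow {S : Type*} [Ring S] {ε : S} {M : ℕ} (h : ε ^ M = 0)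
    (m : ℤ) :
    ∑ j ∈ range M, Ring.choose (m + 1) j • ε ^ j =
      (1 + ε) * ∑ j ∈ range M, Ring.choose m j • ε ^ j := by
  obtain _ | M := M
  · simp
  have hshift : ε * ∑ j ∈ range (M + 1), Ring.choose m j • ε ^ j =
      ∑ j ∈ range M, Ring.choose m j • ε ^ (j + 1) := by
    simp only [sum_range_succ, mul_add, mul_sum, mul_smul_comm, ← pow_succ', h, smul_zero,
      add_zero]
  rw [add_mul, one_mul, hshift, sum_range_succ', sum_range_succ']
  simp only [Ring.choose_succ_succ, Ring.choose_zero_right, add_smul, sum_add_distrib]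
  abel

theorem val_zpow_eq_sum_choose_zsmul {S : Type*} [Ring S] (U : Sˣ) {M : ℕ}
    (h : ((U : S) - 1) ^ M = 0) (m : ℤ) :
    ((U ^ m : Sˣ) : S) = ∑ j ∈ range M, Ring.choose m j • ((U : S) - 1) ^ j := by
  have hstep (m : ℤ) := sum_range_choose_add_one_zsmul_pow h m
  rw [add_sub_cancel] at hstep
  induction m using Int.induction_on with
  | zero =>
    obtain _ | M := M
    · have := subsingleton_of_zero_eq_one (M₀ := S) (by simpa using h.symm)
      exact Subsingleton.elim _ _
    · simp [sum_range_succ', Ring.choose_zero_succ]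
  | succ i ih => rw [hstep, ← ih, ← Units.val_mul, mul_self_zpow, add_comm]
  | pred i ih =>
    rw [← Units.mul_right_inj U, ← hstep, ← Units.val_mul, mul_self_zpow]
    simpa using ih

variable {K : Type*} [Field K] [CharZero K]

theorem exists_polynomial_eval_eq_choose (j : ℕ) :
    ∃ q : Polynomial K, ∀ m : ℤ, q.eval (m : K) = (Ring.choose m j : ℤ) := by
  refine ⟨Polynomial.C ((j.factorial : K)⁻¹) * (descPochhammer ℤ j).map (Int.castRingHom K),
    fun m ↦ ?_⟩
  have hfac : (j.factorial : K) ≠ 0 := mod_cast j.factorial_ne_zero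
  have hchoose := Ring.descPochhammer_eq_factorial_smul_choose m j
  rw [← Polynomial.aeval_eq_smeval, Polynomial.coe_aeval_eq_eval] at hchoose
  rw [Polynomial.eval_mul, Polynomial.eval_C, Polynomial.eval_intCast_map, Int.cast_id, hchoose]
  simp [hfac]

variable {σ : Type*} [Fintype σ]

theorem exists_mvPolynomial_eval_eq_prod_zpow {S : Type*} [CommRing S] (L : S →+ K) (U : σ → Sˣ)
    (hU : ∀ i, IsNilpotent ((U i : S) - 1)) :
    ∃ p : MvPolynomial σ K, ∀ m : σ → ℤ,
      L ((∏ i, U i ^ m i : Sˣ) : S) = MvPolynomial.eval (fun i ↦ (m i : K)) p := by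
  classical
  choose M hM using hU
  choose q hq using exists_polynomial_eval_eq_choose (K := K)
  refine ⟨∑ J ∈ Fintype.piFinset fun i ↦ range (M i),
    MvPolynomial.C (L (∏ i, ((U i : S) - 1) ^ J i)) *
      ∏ i, Polynomial.aeval (MvPolynomial.X i) (q (J i)), fun m ↦ ?_⟩
  have hexpand : ((∏ i, U i ^ m i : Sˣ) : S) = ∑ J ∈ Fintype.piFinset fun i ↦ range (M i),
      (∏ i, Ring.choose (m i) (J i)) • ∏ i, ((U i : S) - 1) ^ J i := by
    simp only [Units.coe_prod, val_zpow_eq_sum_choose_zsmul _ (hM _), prod_univ_sum, zsmul_eq_mul,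
      prod_mul_distrib, Int.cast_prod]
  have heval (i : σ) (j : ℕ) : MvPolynomial.eval (fun i ↦ (m i : K))
      (Polynomial.aeval (MvPolynomial.X i) (q j)) = (Ring.choose (m i) j : ℤ) := by
    rw [← hq, ← MvPolynomial.coe_aeval_eq_eval, AlgHom.coe_toRingHom,
      ← Polynomial.aeval_algHom_apply, MvPolynomial.aeval_X, Polynomial.coe_aeval_eq_eval]
  simp only [hexpand, map_sum, map_zsmul, map_mul, map_prod, MvPolynomial.eval_C, heval]
  simp only [zsmul_eq_mul, Int.cast_prod, mul_comm]

/-- The largest ideal contained in the kernel of an additive functional `L` on a commutative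
ring. -/
def kerIdeal {R G : Type*} [CommRing R] [AddCommGroup G] (L : R →+ G) : Ideal R where
  carrier := {r | ∀ s, L (r * s) = 0}
  zero_mem' := by simp
  add_mem' ha hb s := by rw [add_mul, map_add, ha, hb, add_zero]
  smul_mem' c r hr s := by rw [smul_eq_mul, mul_comm c, mul_assoc, hr]

theorem mem_kerIdeal {R G : Type*} [CommRing R] [AddCommGroup G] {L : R →+ G} {r : R} :
    r ∈ kerIdeal L ↔ ∀ s, L (r * s) = 0 :=
  Iff.rfl

theorem exists_mvPolynomial_eval_eq_prod_zpow_of_kerIdeal {R : Type*} [CommRing R] (L : R →+ K)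
    (u : σ → Rˣ)
    (hu : ∀ i, IsNilpotent (Ideal.Quotient.mk (kerIdeal L) (u i) - 1)) :
    ∃ p : MvPolynomial σ K, ∀ m : σ → ℤ,
      L ((∏ i, u i ^ m i : Rˣ) : R) = MvPolynomial.eval (fun i ↦ (m i : K)) p := by
  let π := Ideal.Quotient.mk (kerIdeal L)
  have hker : (kerIdeal L).toAddSubgroup ≤ L.ker := fun r hr ↦ by
    simpa using mem_kerIdeal.1 hr 1
  obtain ⟨p, hp⟩ := exists_mvPolynomial_eval_eq_prod_zpow
    (QuotientAddGroup.lift _ L hker : R ⧸ kerIdeal L →+ K)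
    (fun i ↦ Units.map (π : R →* R ⧸ kerIdeal L) (u i)) hu
  refine ⟨p, fun m ↦ (hp m).symm ▸ ?_⟩
  simp only [← map_zpow, ← map_prod]
  rfl

end Unipotent

section LatticePolytope

variable {n : ℕ} {P Q : Set (Fin n → ℝ)}

theorem isLatticePolytope_iff :
    IsLatticePolytope P ↔ ∃ s : Finset (Fin n → ℤ), s.Nonempty ∧
      P = convexHull ℝ (latticeInclusion (Fin n) '' s) := by
  simp only [IsLatticePolytope, Finset.coe_image]
  rfl

namespace IsLatticePolytope

theorem singleton (v : Fin n → ℤ) : IsLatticePolytope {latticeInclusion (Fin n) v} :=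
  isLatticePolytope_iff.2 ⟨{v}, by simp⟩

theorem add (hP : IsLatticePolytope P) (hQ : IsLatticePolytope Q) : IsLatticePolytope (P + Q) := by
  obtain ⟨s, hs, rfl⟩ := isLatticePolytope_iff.1 hP
  obtain ⟨t, ht, rfl⟩ := isLatticePolytope_iff.1 hQ
  classical
  exact isLatticePolytope_iff.2
    ⟨s + t, hs.add ht, by rw [Finset.coe_add, Set.image_add, convexHull_add]⟩

theorem convex (hP : IsLatticePolytope P) : Convex ℝ P := by
  obtain ⟨s, -, rfl⟩ := hP
  exact convex_convexHull ℝ _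

theorem nonempty (hP : IsLatticePolytope P) : P.Nonempty := by
  obtain ⟨s, hs, rfl⟩ := hP
  simpa using hs

theorem isBounded (hP : IsLatticePolytope P) : Bornology.IsBounded P := by
  obtain ⟨s, -, rfl⟩ := hP
  exact isBounded_convexHull.2 (Finset.finite_toSet _).isBounded

/-- The indicator function `χ_P` of a lattice polytope `P`, as an integral convex chain. -/
noncomputable def chain (hP : IsLatticePolytope P) : intChainGroup n :=
  ⟨P.indicator 1, AddSubgroup.subset_closure ⟨P, hP, rfl⟩⟩

end IsLatticePolytope

end LatticePolytope

section ChainRing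

variable {n : ℕ} {R : Type*} [CommRing R] {e : intChainGroup n ≃+ R}

/-- The multiplication that `R` carries is the Minkowski multiplication of chains under the
additive identification `e`. -/
def IsMinkowskiMul (e : intChainGroup n ≃+ R) : Prop :=
  ∀ ⦃P Q : Set (Fin n → ℝ)⦄ (hP : IsLatticePolytope P) (hQ : IsLatticePolytope Q),
    e hP.chain * e hQ.chain = e (hP.add hQ).chain

/-- The integral convex chain corresponding to an element of `R`, as a function on `ℝⁿ`. -/
def toChain (e : intChainGroup n ≃+ R) : R →+ ((Fin n → ℝ) → ℤ) :=
  (intChainGroup n).subtype.comp e.symm.toAddMonoidHom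

theorem toChain_injective : Function.Injective (toChain e) :=
  Subtype.val_injective.comp e.symm.injective

theorem finite_support_toChain_comp_latticeInclusion (r : R) :
    (toChain e r ∘ latticeInclusion (Fin n)).support.Finite := by
  have hr : toChain e r ∈ intChainGroup n := (e.symm r).2
  generalize toChain e r = α at hr
  induction hr using AddSubgroup.closure_induction with
  | mem _ h =>
    obtain ⟨P, hP, rfl⟩ := h
    exact (finite_preimage_latticeInclusion hP.isBounded).subset fun x hx ↦
      Set.mem_of_indicator_ne_zero (s := P) hx
  | zero => simp
  | add a b _ _ ha hb =>
    exact (ha.union hb).subset (Function.support_add (a ∘ _) (b ∘ _))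
  | neg a _ ha => exact (Function.support_neg (a ∘ _)).symm ▸ ha

/-- The element `r` of the ring of integral convex chains is the indicator of the lattice
polytope `P`. -/
def IsPolytopeClass (e : intChainGroup n ≃+ R) (r : R) (P : Set (Fin n → ℝ)) : Prop :=
  ∃ hP : IsLatticePolytope P, r = e hP.chain

/-- The indicator of the lattice point `v`, in the ring of integral convex chains. -/
noncomputable def pointClass (e : intChainGroup n ≃+ R) (v : Fin n → ℤ) : R :=
  e (IsLatticePolytope.singleton v).chain

theorem isPolytopeClass_pointClass (v : Fin n → ℤ) :
    IsPolytopeClass e (pointClass e v) {latticeInclusion (Fin n) v} :=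
  ⟨.singleton v, rfl⟩

theorem addMonoidHom_ext_of_isPolytopeClass {G : Type*} [AddGroup G] {L L' : R →+ G}
    (h : ∀ r P, IsPolytopeClass e r P → L r = L' r) : L = L' := by
  have hcomp : L.comp e.toAddMonoidHom = L'.comp e.toAddMonoidHom :=
    AddMonoidHom.eq_of_eqOn_dense (AddSubgroup.closure_closure_coe_preimage)
      fun α ⟨P, hP, hα⟩ ↦ h _ P ⟨hP, congrArg e (Subtype.ext hα)⟩
  ext r
  simpa using DFunLike.congr_fun hcomp (e.symm r)

namespace IsPolytopeClass

variable {r s : R} {P Q : Set (Fin n → ℝ)}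

theorem toChain_eq (h : IsPolytopeClass e r P) : toChain e r = P.indicator 1 := by
  obtain ⟨hP, rfl⟩ := h
  simp [toChain, IsLatticePolytope.chain]

theorem eq (hr : IsPolytopeClass e r P) (hs : IsPolytopeClass e s P) : r = s :=
  toChain_injective (hr.toChain_eq.trans hs.toChain_eq.symm)

theorem mul (he : IsMinkowskiMul e) (hr : IsPolytopeClass e r P) (hs : IsPolytopeClass e s Q) :
    IsPolytopeClass e (r * s) (P + Q) := by
  obtain ⟨hP, rfl⟩ := hr
  obtain ⟨hQ, rfl⟩ := hs
  exact ⟨hP.add hQ, he hP hQ⟩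

theorem one (he : IsMinkowskiMul e) : IsPolytopeClass e 1 {0} := by
  have h0 : IsPolytopeClass e (pointClass e 0) {0} := by
    simpa using isPolytopeClass_pointClass (e := e) 0
  have hid : AddMonoidHom.mulLeft (pointClass e 0) = .id R :=
    addMonoidHom_ext_of_isPolytopeClass (e := e) fun r P hr ↦
      IsPolytopeClass.eq (by simpa using h0.mul he hr) hr
  have h1 : pointClass e 0 = 1 := by simpa using DFunLike.congr_fun hid 1
  rwa [← h1]

theorem pow (he : IsMinkowskiMul e) (h : IsPolytopeClass e r P) (j : ℕ) :
    IsPolytopeClass e (r ^ j) ((j : ℝ) • P) := by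
  induction j with
  | zero =>
    rw [pow_zero, Nat.cast_zero, Set.zero_smul_set h.1.nonempty]
    exact .one he
  | succ j ih =>
    rw [pow_succ, Nat.cast_succ, h.1.convex.add_smul j.cast_nonneg zero_le_one, one_smul]
    exact ih.mul he h

theorem prod (he : IsMinkowskiMul e) {κ : Type*} (s : Finset κ) {r : κ → R}
    {P : κ → Set (Fin n → ℝ)} (h : ∀ i ∈ s, IsPolytopeClass e (r i) (P i)) :
    IsPolytopeClass e (∏ i ∈ s, r i) (∑ i ∈ s, P i) := by
  classical
  induction s using Finset.induction_on with
  | empty => exact .one he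
  | insert i s hi ih =>
    rw [Finset.prod_insert hi, Finset.sum_insert hi]
    exact (h i (s.mem_insert_self i)).mul he (ih fun j hj ↦ h j (Finset.mem_insert_of_mem hj))

theorem prod_zpow_natCast (he : IsMinkowskiMul e) {κ : Type*} [Fintype κ] {u : κ → Rˣ}
    {P : κ → Set (Fin n → ℝ)} (h : ∀ i, IsPolytopeClass e (u i) (P i)) (m : κ → ℕ) :
    IsPolytopeClass e ((∏ i, u i ^ (m i : ℤ) : Rˣ) : R) (∑ i, (m i : ℝ) • P i) := by
  simp only [zpow_natCast, Units.coe_prod, Units.val_pow_eq_pow_val]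
  exact .prod he _ fun i _ ↦ (h i).pow he (m i)

end IsPolytopeClass

theorem toChain_pointClass_mul (he : IsMinkowskiMul e) (v : Fin n → ℤ) (r : R) (x : Fin n → ℝ) :
    toChain e (pointClass e v * r) (x + latticeInclusion (Fin n) v) = toChain e r x := by
  let ev (y : Fin n → ℝ) : R →+ ℤ := (Pi.evalAddMonoidHom _ y).comp (toChain e)
  suffices (ev (x + latticeInclusion (Fin n) v)).comp (.mulLeft (pointClass e v)) = ev x from
    DFunLike.congr_fun this r
  refine addMonoidHom_ext_of_isPolytopeClass (e := e) fun r P hr ↦ ?_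
  change toChain e (_ * _) _ = toChain e r x
  rw [((isPolytopeClass_pointClass v).mul he hr).toChain_eq, hr.toChain_eq, Set.singleton_add,
    add_comm x]
  exact Set.indicator_image (add_right_injective _)

open scoped Classical in
theorem prod_sub_pointClass_eq_zero (he : IsMinkowskiMul e) {κ : Type*} [Fintype κ] [Nonempty κ]
    (a : κ → Fin n → ℤ) {r : R}
    (hr : IsPolytopeClass e r
      (convexHull ℝ (Set.range fun i ↦ latticeInclusion (Fin n) (a i)))) :
    ∏ i, (r - pointClass e (a i)) = 0 := by
  have hterm (S : Finset κ) : IsPolytopeClass e (r ^ Sᶜ.card * ∏ i ∈ S, pointClass e (a i))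
      ((Sᶜ.card : ℝ) • convexHull ℝ (Set.range fun i ↦ latticeInclusion (Fin n) (a i)) +
        {∑ i ∈ S, latticeInclusion (Fin n) (a i)}) := by
    rw [← Set.finsetSum_singleton]
    exact (hr.pow he _).mul he (.prod he S fun i _ ↦ isPolytopeClass_pointClass (a i))
  refine toChain_injective (e := e) (funext fun x ↦ ?_)
  calc toChain e (∏ i, (r - pointClass e (a i))) x
      = ∑ S : Finset κ, (-1) ^ S.card *
          toChain e (r ^ Sᶜ.card * ∏ i ∈ S, pointClass e (a i)) x := by
        rw [Finset.prod_sub, map_sum, Finset.sum_apply, Finset.powerset_univ]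
        refine Finset.sum_congr rfl fun S _ ↦ ?_
        rw [Finset.prod_const, ← Finset.compl_eq_univ_sdiff, mul_assoc]
        have hsign : (-1 : R) ^ S.card = ((-1 : ℤ) ^ S.card : ℤ) := by simp
        rw [hsign, ← zsmul_eq_mul, map_zsmul, Pi.smul_apply, smul_eq_mul]
    _ = ∑ S : Finset κ with x ∈ (Sᶜ.card : ℝ) •
            convexHull ℝ (Set.range fun i ↦ latticeInclusion (Fin n) (a i)) +
              {∑ i ∈ S, latticeInclusion (Fin n) (a i)}, (-1) ^ S.card := by
        simp only [(hterm _).toChain_eq, Set.indicator_apply, Pi.one_apply, mul_ite, mul_one,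
          mul_zero, Finset.sum_filter]
    _ = 0 := sum_filter_mem_convexHull_range_neg_one_pow _ x
    _ = toChain e 0 x := by simp

theorem finite_support_toChain_smul {G : Type*} [AddCommGroup G] (r : R) (g : (Fin n → ℤ) → G) :
    (fun x ↦ toChain e r (latticeInclusion (Fin n) x) • g x).support.Finite :=
  (finite_support_toChain_comp_latticeInclusion r).subset fun _ hx ↦ left_ne_zero_of_smul hx

/-- The functional `r ↦ ∑ r(x) g(x)` on the ring of integral convex chains, the sum being over
the lattice points `x`. -/
noncomputable def weightedSum {G : Type*} [AddCommGroup G] (e : intChainGroup n ≃+ R)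
    (g : (Fin n → ℤ) → G) : R →+ G where
  toFun r := ∑ᶠ x, toChain e r (latticeInclusion (Fin n) x) • g x
  map_zero' := by simp
  map_add' r s := by
    simp only [map_add, Pi.add_apply, add_smul]
    exact finsum_add_distrib (finite_support_toChain_smul r g) (finite_support_toChain_smul s g)

theorem IsPolytopeClass.weightedSum_eq {G : Type*} [AddCommGroup G] {r : R}
    {P : Set (Fin n → ℝ)} (h : IsPolytopeClass e r P) (g : (Fin n → ℤ) → G) :
    weightedSum e g r = ∑ᶠ x ∈ latticeInclusion (Fin n) ⁻¹' P, g x := by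
  change ∑ᶠ x, toChain e r (latticeInclusion (Fin n) x) • g x = _
  simp only [h.toChain_eq, finsum_mem_def]
  classical
  refine finsum_congr fun x ↦ ?_
  by_cases hx : latticeInclusion (Fin n) x ∈ P <;> simp [hx]

section WeightedSum

variable {G : Type*} [AddCommGroup G] {g : (Fin n → ℤ) → G} {v : Fin n → ℤ}

theorem weightedSum_pointClass_sub_one_mul (he : IsMinkowskiMul e) (r : R) :
    weightedSum e g ((pointClass e v - 1) * r) = weightedSum e (fwdDiff v g) r := by
  have hshift : weightedSum e g (pointClass e v * r) = weightedSum e (fun x ↦ g (x + v)) r :=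
    (finsum_comp_equiv (Equiv.addRight v)).symm.trans <| finsum_congr fun x ↦ by
      simp [toChain_pointClass_mul he]
  rw [sub_mul, one_mul, map_sub, hshift]
  exact (finsum_sub_distrib (finite_support_toChain_smul r _)
    (finite_support_toChain_smul r g)).symm.trans (finsum_congr fun x ↦ (smul_sub _ _ _).symm)

theorem weightedSum_pointClass_sub_one_pow_mul (he : IsMinkowskiMul e) (M : ℕ) (r : R) :
    weightedSum e g ((pointClass e v - 1) ^ M * r) = weightedSum e ((fwdDiff v)^[M] g) r := by
  induction M generalizing g with
  | zero => simp
  | succ M ih =>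
    rw [pow_succ', mul_assoc, weightedSum_pointClass_sub_one_mul he, ih,
      Function.iterate_succ_apply]

theorem isNilpotent_mk_pointClass_sub_one (he : IsMinkowskiMul e) {M : ℕ}
    (hg : (fwdDiff v)^[M] g = 0) :
    IsNilpotent (Ideal.Quotient.mk (kerIdeal (weightedSum e g)) (pointClass e v) - 1) := by
  refine ⟨M, ?_⟩
  rw [← map_one (Ideal.Quotient.mk _), ← map_sub, ← map_pow, Ideal.Quotient.eq_zero_iff_mem,
    mem_kerIdeal]
  intro r
  rw [weightedSum_pointClass_sub_one_pow_mul he, hg]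
  simp [weightedSum]

theorem IsPolytopeClass.isNilpotent_mk_sub_one (he : IsMinkowskiMul e) {r : R}
    {P : Set (Fin n → ℝ)} (hr : IsPolytopeClass e r P) (hg : ∀ v, ∃ M, (fwdDiff v)^[M] g = 0) :
    IsNilpotent (Ideal.Quotient.mk (kerIdeal (weightedSum e g)) r - 1) := by
  obtain ⟨s, hs, rfl⟩ := isLatticePolytope_iff.1 hr.1
  have : Nonempty s := hs.to_subtype
  rw [Set.image_eq_range] at hr
  refine isNilpotent_sub_one_of_prod_sub_eq_zero (s := Finset.univ)
    (T := fun a : s ↦ Ideal.Quotient.mk _ (pointClass e a))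
    (fun a _ ↦ isNilpotent_mk_pointClass_sub_one he (hg a).choose_spec) ?_
  simpa only [map_prod, map_sub, map_zero] using
    congrArg (Ideal.Quotient.mk (kerIdeal (weightedSum e g)))
      (prod_sub_pointClass_eq_zero he (fun a : s ↦ (a : Fin n → ℤ)) hr)

end WeightedSum

open MvPolynomial in
theorem exists_mvPolynomial_totalDegree_le_eval_eq_weightedSum (he : IsMinkowskiMul e)
    {κ : Type*} [Fintype κ] {u : κ → Rˣ} {P : κ → Set (Fin n → ℝ)}
    (hu : ∀ i, IsPolytopeClass e (u i) (P i)) (f : MvPolynomial (Fin n) ℝ) :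
    ∃ p : MvPolynomial κ ℝ, p.totalDegree ≤ n + f.totalDegree ∧ ∀ m : κ → ℤ,
      weightedSum e (fun x ↦ eval (latticeInclusion (Fin n) x) f) ((∏ i, u i ^ m i : Rˣ) : R) =
        eval (fun i ↦ (m i : ℝ)) p := by
  obtain ⟨p, hp⟩ := exists_mvPolynomial_eval_eq_prod_zpow_of_kerIdeal _ u fun i ↦
    (hu i).isNilpotent_mk_sub_one he fun v ↦
      ⟨_, fwdDiff_iter_eval_comp_eq_zero f (latticeInclusion (Fin n)) v⟩
  refine ⟨p, totalDegree_le_of_isBigO fun m ↦ ?_, hp⟩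
  have hdilate (t : ℕ) : ∑ i, ((t * m i : ℕ) : ℝ) • P i = (t : ℝ) • ∑ i, (m i : ℝ) • P i := by
    simp only [Finset.smul_sum, smul_smul, Nat.cast_mul]
  have hvalue (t : ℕ) : eval (fun i ↦ (t : ℝ) * m i) p = ∑ᶠ x ∈ latticeInclusion (Fin n) ⁻¹'
      ((t : ℝ) • ∑ i, (m i : ℝ) • P i), eval (latticeInclusion (Fin n) x) f := by
    rw [← hdilate, ← (IsPolytopeClass.prod_zpow_natCast he hu _).weightedSum_eq, hp]
    simp
  simpa only [hvalue, Fintype.card_fin] using isBigO_finsum_eval_smul f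
    (IsPolytopeClass.prod_zpow_natCast he hu m).1.isBounded

end ChainRing

/-- Let `Δ 1, …, Δ k` be integral convex polytopes in `ℝⁿ` and
`f : ℝⁿ → ℝ` a polynomial of degree `d`.  In the ring `Z(ℤⁿ)` of integral convex chains
(a commutative ring `R` identified additively with the chain group via `e` and whose
multiplication is Minkowski multiplication on indicators), the indicators `χ_{Δ i}` are
units `u i`, and the function
`Φ(m₁,…,m_k) = Σ_{x ∈ ℤⁿ} f(x) · (χ_{Δ 1}^{m₁} * ⋯ * χ_{Δ k}^{m_k})(x)` (defined for all
`m ∈ ℤᵏ` using the inverses of the units for negative exponents) agrees with the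
restriction to `ℤᵏ` of a polynomial on `ℝᵏ` of degree at most `n + d`; in particular, for
nonnegative `mᵢ`, `Φ(m) = Σ_{x ∈ (m₁Δ 1 + ⋯ + m_kΔ k) ∩ ℤⁿ} f(x)`. -/
theorem stmt11 {n k d : ℕ} (f : MvPolynomial (Fin n) ℝ) (hf : f.totalDegree = d)
    {R : Type*} [CommRing R] (e : ↥(intChainGroup n) ≃+ R)
    (hmul : ∀ (P Q : Set (Fin n → ℝ)), IsLatticePolytope P → IsLatticePolytope Q →
      ∀ (hP : Set.indicator P (1 : (Fin n → ℝ) → ℤ) ∈ intChainGroup n)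
        (hQ : Set.indicator Q (1 : (Fin n → ℝ) → ℤ) ∈ intChainGroup n)
        (hPQ : Set.indicator (P + Q) (1 : (Fin n → ℝ) → ℤ) ∈ intChainGroup n),
        e ⟨_, hP⟩ * e ⟨_, hQ⟩ = e ⟨_, hPQ⟩)
    (A : Fin k → Finset (Fin n → ℤ)) (hA : ∀ i, (A i).Nonempty)
    (Δ : Fin k → Set (Fin n → ℝ))
    (hΔ : ∀ i, Δ i = convexHull ℝ ↑((A i).image fun v j => (v j : ℝ)))
    (u : Fin k → Rˣ)
    (hu : ∀ (i : Fin k) (hi : Set.indicator (Δ i) (1 : (Fin n → ℝ) → ℤ) ∈ intChainGroup n),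
      (u i : R) = e ⟨_, hi⟩)
    (Φ : (Fin k → ℤ) → ℝ)
    (hΦ : ∀ m : Fin k → ℤ,
      Φ m = ∑ᶠ x : Fin n → ℤ,
        MvPolynomial.eval (fun i => (x i : ℝ)) f *
          ((((e.symm (((∏ i, u i ^ m i : Rˣ) : R)) : ↥(intChainGroup n)) :
              (Fin n → ℝ) → ℤ) (fun i => (x i : ℝ)) : ℤ) : ℝ)) :
    ∃ p : MvPolynomial (Fin k) ℝ, p.totalDegree ≤ n + d ∧
      (∀ m : Fin k → ℤ, Φ m = MvPolynomial.eval (fun i => (m i : ℝ)) p) ∧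
      (∀ m : Fin k → ℕ, Φ (fun i => (m i : ℤ)) =
        ∑ᶠ x ∈ {x : Fin n → ℤ | (fun i => (x i : ℝ)) ∈ ∑ i, (m i : ℝ) • Δ i},
          MvPolynomial.eval (fun i => (x i : ℝ)) f) := by
  subst hf
  have he : IsMinkowskiMul e := fun P Q hP hQ ↦ hmul P Q hP hQ _ _ _
  have hclass (i : Fin k) : IsPolytopeClass e (u i) (Δ i) :=
    ⟨⟨A i, hA i, hΔ i⟩, hu i _⟩
  have hΦ' (m : Fin k → ℤ) : Φ m = weightedSum e
      (fun x ↦ MvPolynomial.eval (latticeInclusion (Fin n) x) f) ((∏ i, u i ^ m i : Rˣ) : R) :=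
    (hΦ m).trans <| finsum_congr fun x ↦ by rw [zsmul_eq_mul, mul_comm]; rfl
  obtain ⟨p, hdeg, hp⟩ := exists_mvPolynomial_totalDegree_le_eval_eq_weightedSum he hclass f
  refine ⟨p, hdeg, fun m ↦ (hΦ' m).trans (hp m), fun m ↦ ?_⟩
  rw [hΦ', (IsPolytopeClass.prod_zpow_natCast he hclass m).weightedSum_eq]
  rfl
end

section
/- (Ehrhart reciprocity as a special case) For an integral convex polytope Δ ⊆ ℝ^n, let E(m) = #(mΔ ∩ ℤ^n) for integers m ≥ 0. Then E extends to a polynomial in m, and its value at m = −1 equals (−1)^{dim Δ} times the number of lattice points in the relative interior of Δ. -/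
open Pointwise Module

/-!
Put the polytope `Δ = conv (v i)` at height `1`: the lattice points of `m • Δ` are those at height
`m` in the cone over the vectors `(v i, 1)`. Lifting these vectors by a generic height function and
projecting the lower hull triangulates the cone into simplicial cones. For a generic direction `u`
in the open cone, assigning `x` to the simplicial cone containing `x + ε • u` for all small `ε > 0`
writes the closed cone as a disjoint union of half-open simplicial cones; using `-u` instead writes
the open cone as the disjoint union of the same simplicial cones with the complementary choice of
facets.

A half-open simplicial cone is tiled by the translates of its half-open fundamental box, so each
lattice point `y` of the box contributes the binomial polynomial `(m - ht y + e).choose e`, with `e`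
the dimension of `Δ`. The involution `y ↦ ∑ i, b i - y` exchanges the boxes of complementary facet
choices, and on binomial polynomials it amounts to `m ↦ -m` up to the sign `(-1) ^ e`.
-/

open Filter Topology Set Polynomial

section Perturbation

lemma eventually_add_mul_pos {α : ℝ} (hα : 0 < α) (β : ℝ) :
    ∀ᶠ ε in 𝓝[>] (0 : ℝ), 0 < α + ε * β := by
  have hcont : Continuous fun ε : ℝ => α + ε * β := by fun_prop
  have hlim : Tendsto (fun ε : ℝ => α + ε * β) (𝓝 0) (𝓝 α) := by
    simpa using hcont.tendsto 0
  exact (hlim.eventually_const_lt hα).filter_mono nhdsWithin_le_nhds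

lemma eventually_add_mul_pos_iff (α β : ℝ) :
    ∀ᶠ ε in 𝓝[>] (0 : ℝ), 0 < α + ε * β ↔ (0 < β → 0 ≤ α) ∧ (¬ 0 < β → 0 < α) := by
  rcases lt_trichotomy α 0 with hα | rfl | hα
  · filter_upwards [eventually_add_mul_pos (neg_pos.2 hα) (-β)] with ε hε
    grind
  · filter_upwards [self_mem_nhdsWithin] with ε (hε : 0 < ε)
    simp [hε]
  · filter_upwards [eventually_add_mul_pos hα β] with ε hε
    grind

lemma eventually_add_mul_ne_zero (α : ℝ) {β : ℝ} (hβ : β ≠ 0) :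
    ∀ᶠ ε in 𝓝[>] (0 : ℝ), α + ε * β ≠ 0 := by
  rcases lt_trichotomy α 0 with hα | rfl | hα
  · filter_upwards [eventually_add_mul_pos (neg_pos.2 hα) (-β)] with ε hε
    grind
  · filter_upwards [self_mem_nhdsWithin] with ε (hε : 0 < ε)
    simp [hε.ne', hβ]
  · filter_upwards [eventually_add_mul_pos hα β] with ε hε
    exact hε.ne'

end Perturbation

section Cones

variable {V ι κ : Type*} [AddCommGroup V] [Module ℝ V] [Fintype ι]

/-- The closed convex cone generated by a finite family `w`. -/
def closedCone (w : ι → V) : Set V :=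
  Fintype.linearCombination ℝ w '' {a | ∀ i, 0 ≤ a i}

/-- The relatively open cone generated by a finite family `w`: all coefficients are positive. -/
def openCone (w : ι → V) : Set V :=
  Fintype.linearCombination ℝ w '' {a | ∀ i, 0 < a i}

/-- The simplicial cone of a basis `b` with the facets opposite to the vectors `b i`, `i ∉ A`,
removed; `A = univ` gives the closed cone and `A = ∅` the open one. -/
def halfOpenCone (b : Basis κ ℝ V) (A : Set κ) : Set V :=
  {x | ∀ i, (i ∈ A → 0 ≤ b.repr x i) ∧ (i ∉ A → 0 < b.repr x i)}

/-- The coordinates in which `u` is positive. They index the facets of the cone of `b` that survive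
when a point is assigned to the cone after an infinitesimal shift in direction `u`. -/
def posCoords (b : Basis κ ℝ V) (u : V) : Set κ :=
  {i | 0 < b.repr u i}

variable {w : ι → V}

lemma add_mem_openCone {x y : V} (hx : x ∈ closedCone w) (hy : y ∈ openCone w) :
    x + y ∈ openCone w := by
  obtain ⟨a, ha, rfl⟩ := hx
  obtain ⟨c, hc, rfl⟩ := hy
  exact ⟨a + c, fun i => add_pos_of_nonneg_of_pos (ha i) (hc i), map_add _ _ _⟩

lemma smul_mem_openCone {t : ℝ} (ht : 0 < t) {x : V} (hx : x ∈ openCone w) :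
    t • x ∈ openCone w := by
  obtain ⟨a, ha, rfl⟩ := hx
  exact ⟨t • a, fun i => mul_pos ht (ha i), map_smul _ _ _⟩

lemma openCone_subset_closedCone : openCone w ⊆ closedCone w :=
  image_mono fun _ ha i => (ha i).le

lemma eventually_add_smul_mem_openCone {x : V} (hx : x ∈ openCone w) (y : ι → ℝ) :
    ∀ᶠ ε in 𝓝[>] (0 : ℝ), x + ε • Fintype.linearCombination ℝ w y ∈ openCone w := by
  obtain ⟨a, ha, rfl⟩ := hx
  filter_upwards [eventually_all.2 fun i => eventually_add_mul_pos (ha i) (y i)] with ε hε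
  exact ⟨a + ε • y, hε, by rw [map_add, map_smul]⟩

lemma one_linearCombination_mem_openCone (w : ι → V) :
    Fintype.linearCombination ℝ w 1 ∈ openCone w :=
  ⟨1, fun _ => one_pos, rfl⟩

end Cones

section Subbases

variable {V ι : Type*} [AddCommGroup V] [Module ℝ V]

/-- The subfamilies of `w` that are bases of `V`, recorded by their index sets: the candidates for
the maximal simplices of a triangulation. -/
def Subbasis (w : ι → V) : Type _ :=
  {σ : Set ι // LinearIndepOn ℝ w σ ∧ ⊤ ≤ Submodule.span ℝ (w '' σ)}

namespace Subbasis

variable {w : ι → V}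

instance [Finite ι] : Finite (Subbasis w) := by
  unfold Subbasis; infer_instance

/-- The basis of `V` formed by a subbasis. -/
noncomputable def basis (σ : Subbasis w) : Basis σ.1 ℝ V :=
  Basis.mk σ.2.1 (by simpa only [image_eq_range] using σ.2.2)

@[simp]
lemma basis_apply (σ : Subbasis w) (i : σ.1) : σ.basis i = w i :=
  Basis.mk_apply _ _ _

@[simp]
lemma basis_repr_coe (σ : Subbasis w) (i : σ.1) : σ.basis.repr (w i) = Finsupp.single i 1 := by
  rw [← σ.basis_apply i, Basis.repr_self]

open Classical in
/-- The coordinates of a vector in a subbasis, extended by zero to the full index set. -/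
noncomputable def coords (σ : Subbasis w) : V →ₗ[ℝ] ι → ℝ :=
  σ.basis.constr ℝ fun i => Pi.single i.1 1

open Classical in
lemma coords_coe (σ : Subbasis w) (i : σ.1) : σ.coords (w i) = Pi.single i.1 1 := by
  rw [coords, ← σ.basis_apply i, Basis.constr_basis]

lemma coords_eq_repr (σ : Subbasis w) (x : V) (i : σ.1) : σ.coords x i = σ.basis.repr x i := by
  classical
  refine LinearMap.congr_fun (f := .proj i.1 ∘ₗ σ.coords) (g := σ.basis.coord i)
    (σ.basis.ext fun j => ?_) x
  simp [coords_coe, Finsupp.single_apply, Pi.single_apply, Subtype.ext_iff, eq_comm]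

lemma coords_eq_zero (σ : Subbasis w) (x : V) {i : ι} (hi : i ∉ σ.1) : σ.coords x i = 0 := by
  classical
  refine LinearMap.congr_fun (f := .proj i ∘ₗ σ.coords) (g := 0)
    (σ.basis.ext fun j => ?_) x
  have hij : i ≠ j := fun h => hi (h ▸ j.2)
  simp [coords_coe, hij]

lemma coords_nonneg {σ : Subbasis w} {x : V} (hx : ∀ i, 0 ≤ σ.basis.repr x i) (i : ι) :
    0 ≤ σ.coords x i := by
  by_cases hi : i ∈ σ.1
  · exact (σ.coords_eq_repr x ⟨i, hi⟩).symm ▸ hx ⟨i, hi⟩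
  · exact (σ.coords_eq_zero x hi).ge

variable [Fintype ι]

@[simp]
lemma linearCombination_coords (σ : Subbasis w) (x : V) :
    Fintype.linearCombination ℝ w (σ.coords x) = x := by
  classical
  refine LinearMap.congr_fun (f := Fintype.linearCombination ℝ w ∘ₗ σ.coords) (g := .id)
    (σ.basis.ext fun j => ?_) x
  simp [coords_coe]

lemma coords_linearCombination (σ : Subbasis w) {a : ι → ℝ} (ha : Function.support a ⊆ σ.1) :
    σ.coords (Fintype.linearCombination ℝ w a) = a := by
  classical
  have hterm (j : ι) : a j • σ.coords (w j) = Pi.single j (a j) := by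
    by_cases hj : a j = 0
    · simp [hj]
    · rw [σ.coords_coe ⟨j, ha hj⟩, ← Pi.single_smul', smul_eq_mul, mul_one]
  simp only [Fintype.linearCombination_apply, map_sum, map_smul, hterm, Finset.univ_sum_single]

lemma exists_subset_of_linearCombination (hw : Submodule.span ℝ (range w) = ⊤) (a : ι → ℝ)
    (ha : ∀ σ : Subbasis w, ∀ i, σ.basis.repr (Fintype.linearCombination ℝ w a) i ≠ 0) :
    ∃ σ : Subbasis w, σ.1 ⊆ Function.support a := by
  obtain ⟨B, hB, -, hBspan, hBind⟩ :=
    exists_linearIndepOn_extension (linearIndepOn_empty ℝ w) (empty_subset (Function.support a))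
  obtain ⟨C, -, hBC, hCspan, hCind⟩ := exists_linearIndepOn_extension hBind (subset_univ B)
  let σ : Subbasis w := ⟨C, hCind, hw ▸ Submodule.span_le.2 (by simpa using hCspan)⟩
  have hmem : Fintype.linearCombination ℝ w a ∈ Submodule.span ℝ (w '' B) := by
    rw [Fintype.linearCombination_apply]
    refine Submodule.sum_mem _ fun i _ => ?_
    by_cases hi : a i = 0
    · simp [hi]
    · exact Submodule.smul_mem _ _ (hBspan (mem_image_of_mem w hi))
  refine ⟨σ, fun i hi => ?_⟩
  by_contra hia
  have hker : Submodule.span ℝ (w '' B) ≤ LinearMap.ker (σ.basis.coord ⟨i, hi⟩) := by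
    refine Submodule.span_le.2 ?_
    rintro _ ⟨j, hj, rfl⟩
    have hij : (⟨j, hBC hj⟩ : σ.1) ≠ ⟨i, hi⟩ := by grind
    simpa [hij] using DFunLike.congr_fun (σ.basis_repr_coe ⟨j, hBC hj⟩) ⟨i, hi⟩
  exact ha σ ⟨i, hi⟩ (hker hmem)

end Subbasis

/-- Genericity with respect to `w`: all coordinates in every subbasis of `w` are nonzero. -/
def IsGeneric (w : ι → V) (x : V) : Prop :=
  ∀ σ : Subbasis w, ∀ i, σ.basis.repr x i ≠ 0

variable {w : ι → V} {u : V}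

lemma IsGeneric.neg (hu : IsGeneric w u) : IsGeneric w (-u) := fun σ i => by
  simpa using hu σ i

lemma IsGeneric.posCoords_neg (hu : IsGeneric w u) (σ : Subbasis w) :
    posCoords σ.basis (-u) = (posCoords σ.basis u)ᶜ := by
  ext i
  simp [posCoords, (hu σ i).le_iff_lt]

lemma IsGeneric.eventually_add_smul [Finite ι] (hu : IsGeneric w u) (x : V) :
    ∀ᶠ ε in 𝓝[>] (0 : ℝ), IsGeneric w (x + ε • u) := by
  refine eventually_all.2 fun σ => eventually_all.2 fun i => ?_
  simpa using eventually_add_mul_ne_zero (σ.basis.repr x i) (hu σ i)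

variable [Fintype ι]

/-- Genericity of a height function on the index set of `w`: no lifted vector `(w j, h j)` lies on
the hyperplane spanned by the lifts of a subbasis not containing `j`. -/
def IsGenericHeight (w : ι → V) (h : ι → ℝ) : Prop :=
  ∀ σ : Subbasis w, ∀ j ∉ σ.1, σ.coords (w j) ⬝ᵥ h ≠ h j

/-- A subbasis is lower for the heights `h` if the hyperplane spanned by its lifted vectors lies
strictly below all other lifted vectors. The cones over the lower subbases form the regular
triangulation induced by `h`. -/
def Subbasis.IsLower (h : ι → ℝ) (σ : Subbasis w) : Prop :=
  ∀ j ∉ σ.1, σ.coords (w j) ⬝ᵥ h < h j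

lemma exists_isGeneric_mem_openCone (w : ι → V) : ∃ u ∈ openCone w, IsGeneric w u := by
  obtain ⟨x, hx⟩ := Dual.exists_forall_ne_zero_of_forall_exists
    (f := fun p : (σ : Subbasis w) × σ.1 =>
      p.1.basis.coord p.2 ∘ₗ Fintype.linearCombination ℝ w)
    fun p => by
      classical
      refine ⟨Pi.single p.2.1 1, ?_⟩
      simp
  have hgeneric : ∀ᶠ ε in 𝓝[>] (0 : ℝ), IsGeneric w
      (Fintype.linearCombination ℝ w 1 + ε • Fintype.linearCombination ℝ w x) := by
    refine eventually_all.2 fun σ => eventually_all.2 fun i => ?_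
    simpa using eventually_add_mul_ne_zero _ (hx ⟨σ, i⟩)
  obtain ⟨ε, hopen, hε⟩ :=
    ((eventually_add_smul_mem_openCone (one_linearCombination_mem_openCone w) x).and
      hgeneric).exists
  exact ⟨_, hopen, hε⟩

lemma exists_isGenericHeight (w : ι → V) : ∃ h, IsGenericHeight w h := by
  obtain ⟨h, hh⟩ := Dual.exists_forall_ne_zero_of_forall_exists
    (f := fun p : (σ : Subbasis w) × ↥(σ.1ᶜ) =>
      LinearMap.proj p.2.1 - dotProductBilin ℝ ℝ (p.1.coords (w p.2)))
    fun p => by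
      classical
      refine ⟨Pi.single p.2.1 1, ?_⟩
      simp [p.1.coords_eq_zero _ p.2.2]
  exact ⟨h, fun σ j hj heq => hh ⟨σ, ⟨j, hj⟩⟩ (by simp [heq])⟩

end Subbases

section RegularTriangulation

variable {V ι : Type*} [AddCommGroup V] [Module ℝ V] [Fintype ι] {w : ι → V} {h : ι → ℝ}

lemma Subbasis.IsLower.coords_dotProduct_le {σ : Subbasis w} (hσ : σ.IsLower h) (j : ι) :
    σ.coords (w j) ⬝ᵥ h ≤ h j := by
  classical
  by_cases hj : j ∈ σ.1
  · simp [σ.coords_coe ⟨j, hj⟩]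
  · exact (hσ j hj).le

lemma Subbasis.coords_linearCombination_dotProduct (σ : Subbasis w) (a : ι → ℝ) :
    σ.coords (Fintype.linearCombination ℝ w a) ⬝ᵥ h = ∑ j, a j * (σ.coords (w j) ⬝ᵥ h) := by
  simp only [Fintype.linearCombination_apply, map_sum, map_smul, sum_dotProduct, smul_dotProduct,
    smul_eq_mul]

lemma Subbasis.IsLower.coords_linearCombination_dotProduct_le {σ : Subbasis w} (hσ : σ.IsLower h)
    {a : ι → ℝ} (ha : ∀ i, 0 ≤ a i) :
    σ.coords (Fintype.linearCombination ℝ w a) ⬝ᵥ h ≤ a ⬝ᵥ h := by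
  rw [σ.coords_linearCombination_dotProduct]
  exact Finset.sum_le_sum fun j _ => mul_le_mul_of_nonneg_left (hσ.coords_dotProduct_le j) (ha j)

lemma Subbasis.IsLower.coords_linearCombination_dotProduct_lt {σ : Subbasis w} (hσ : σ.IsLower h)
    {a : ι → ℝ} (ha : ∀ i, 0 ≤ a i) {j : ι} (hj : j ∉ σ.1) (haj : 0 < a j) :
    σ.coords (Fintype.linearCombination ℝ w a) ⬝ᵥ h < a ⬝ᵥ h := by
  rw [σ.coords_linearCombination_dotProduct]
  exact Finset.sum_lt_sum
    (fun i _ => mul_le_mul_of_nonneg_left (hσ.coords_dotProduct_le i) (ha i))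
    ⟨j, Finset.mem_univ j, mul_lt_mul_of_pos_left (hσ j hj) haj⟩

lemma Subbasis.IsLower.subset_of_repr_pos {σ τ : Subbasis w} (hσ : σ.IsLower h) (hτ : τ.IsLower h)
    {x : V} (hxσ : ∀ i, 0 < σ.basis.repr x i) (hxτ : ∀ i, 0 < τ.basis.repr x i) :
    τ.1 ⊆ σ.1 := by
  intro j hjτ
  by_contra hjσ
  have hle := hτ.coords_linearCombination_dotProduct_le
    (Subbasis.coords_nonneg fun i => (hxσ i).le)
  have hlt := hσ.coords_linearCombination_dotProduct_lt
    (Subbasis.coords_nonneg fun i => (hxτ i).le) hjσ (τ.coords_eq_repr x ⟨j, hjτ⟩ ▸ hxτ ⟨j, hjτ⟩)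
  simp only [Subbasis.linearCombination_coords] at hle hlt
  exact hlt.not_ge hle

lemma Subbasis.IsLower.eq_of_repr_pos {σ τ : Subbasis w} (hσ : σ.IsLower h) (hτ : τ.IsLower h)
    {x : V} (hxσ : ∀ i, 0 < σ.basis.repr x i) (hxτ : ∀ i, 0 < τ.basis.repr x i) : σ = τ :=
  Subtype.ext <| (hτ.subset_of_repr_pos hσ hxτ hxσ).antisymm (hσ.subset_of_repr_pos hτ hxσ hxτ)

lemma height_linearCombination {ht : V →ₗ[ℝ] ℝ} (hht : ∀ i, ht (w i) = 1) (a : ι → ℝ) :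
    ht (Fintype.linearCombination ℝ w a) = ∑ i, a i := by
  simp [Fintype.linearCombination_apply, hht]

/-- The nonnegative coefficient vectors representing `x` in terms of `w`: the feasible region of the
linear program whose minimum at `x` is the lower hull over `x`. -/
def nonnegCoeffs (w : ι → V) (x : V) : Set (ι → ℝ) :=
  {a | (∀ i, 0 ≤ a i) ∧ Fintype.linearCombination ℝ w a = x}

lemma isClosed_nonnegCoeffs (w : ι → V) (x : V) : IsClosed (nonnegCoeffs w x) := by
  rcases (nonnegCoeffs w x).eq_empty_or_nonempty with hempty | ⟨a₀, -, rfl⟩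
  · exact hempty ▸ isClosed_empty
  set L := Fintype.linearCombination ℝ w
  have hfiber : IsClosed {a | a - a₀ ∈ LinearMap.ker L} :=
    (Submodule.closed_of_finiteDimensional (LinearMap.ker L)).preimage (by fun_prop)
  simp only [LinearMap.mem_ker, map_sub, sub_eq_zero] at hfiber
  exact (isClosed_Ici (a := (0 : ι → ℝ))).inter hfiber

lemma exists_isMinOn_dotProduct {ht : V →ₗ[ℝ] ℝ} (hht : ∀ i, ht (w i) = 1) (h : ι → ℝ) {x : V}
    (hx : x ∈ closedCone w) :
    ∃ a ∈ nonnegCoeffs w x, IsMinOn (· ⬝ᵥ h) (nonnegCoeffs w x) a := by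
  obtain ⟨a₀, ha₀, rfl⟩ := hx
  have hsubset : nonnegCoeffs w (Fintype.linearCombination ℝ w a₀) ⊆
      Icc 0 fun _ => ht (Fintype.linearCombination ℝ w a₀) := by
    rintro a ⟨ha, hax⟩
    refine ⟨ha, fun i => ?_⟩
    rw [← hax, height_linearCombination hht]
    exact Finset.single_le_sum (fun j _ => ha j) (Finset.mem_univ i)
  exact (isCompact_Icc.of_isClosed_subset (isClosed_nonnegCoeffs _ _) hsubset).exists_isMinOn
    ⟨a₀, ha₀, rfl⟩ (by unfold dotProduct; fun_prop)

lemma dotProduct_nonneg_of_isMinOn {x : V} {a d : ι → ℝ}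
    (ha : a ∈ nonnegCoeffs w x) (hmin : IsMinOn (· ⬝ᵥ h) (nonnegCoeffs w x) a)
    (hd : Fintype.linearCombination ℝ w d = 0) (hda : ∀ i, a i = 0 → 0 ≤ d i) : 0 ≤ d ⬝ᵥ h := by
  have hpos : ∀ᶠ ε in 𝓝[>] (0 : ℝ), ∀ i, 0 ≤ a i + ε * d i := by
    refine eventually_all.2 fun i => ?_
    rcases (ha.1 i).eq_or_lt with hi | hi
    · filter_upwards [self_mem_nhdsWithin] with ε (hε : 0 < ε)
      simpa [← hi] using mul_nonneg hε.le (hda i hi.symm)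
    · exact (eventually_add_mul_pos hi (d i)).mono fun _ => le_of_lt
  obtain ⟨ε, hε, hεpos : 0 < ε⟩ := (hpos.and self_mem_nhdsWithin).exists
  have hle : a ⬝ᵥ h ≤ (a + ε • d) ⬝ᵥ h :=
    hmin ⟨hε, by rw [map_add, map_smul, hd, smul_zero, add_zero, ha.2]⟩
  rw [add_dotProduct, smul_dotProduct, smul_eq_mul] at hle
  exact nonneg_of_mul_nonneg_right (by linarith) hεpos

lemma IsGenericHeight.isLower_of_isMinOn (hh : IsGenericHeight w h) {σ : Subbasis w} {x : V}
    {a : ι → ℝ} (ha : a ∈ nonnegCoeffs w x) (hmin : IsMinOn (· ⬝ᵥ h) (nonnegCoeffs w x) a)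
    (hσ : σ.1 ⊆ Function.support a) : σ.IsLower h := by
  classical
  intro j hj
  have hnonneg := dotProduct_nonneg_of_isMinOn (d := Pi.single j 1 - σ.coords (w j)) ha hmin
    (by simp) fun i hi => by
      rw [Pi.sub_apply, σ.coords_eq_zero _ fun hiσ => hσ hiσ hi, sub_zero]
      exact (Pi.single_nonneg (α := fun _ => ℝ)).2 zero_le_one i
  rw [sub_dotProduct, single_one_dotProduct, sub_nonneg] at hnonneg
  exact hnonneg.lt_of_ne (hh σ j hj)

lemma Subbasis.IsLower.repr_nonneg_of_isMinOn {σ : Subbasis w} (hlower : σ.IsLower h) {x : V}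
    {a : ι → ℝ} (ha : a ∈ nonnegCoeffs w x) (hmin : IsMinOn (· ⬝ᵥ h) (nonnegCoeffs w x) a)
    (hσ : σ.1 ⊆ Function.support a) (i : σ.1) : 0 ≤ σ.basis.repr x i := by
  have hle := dotProduct_nonneg_of_isMinOn (d := σ.coords x - a) ha hmin (by simp [ha.2])
    fun i hi => by rw [Pi.sub_apply, hi, σ.coords_eq_zero _ fun hiσ => hσ hiσ hi, sub_zero]
  have hsupport : Function.support a ⊆ σ.1 := by
    intro j haj
    by_contra hj
    have hlt := hlower.coords_linearCombination_dotProduct_lt ha.1 hj ((ha.1 j).lt_of_ne' haj)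
    rw [sub_dotProduct, sub_nonneg] at hle
    exact (ha.2 ▸ hlt).not_ge hle
  rw [← σ.coords_eq_repr, ← ha.2, σ.coords_linearCombination hsupport]
  exact ha.1 i

lemma IsGenericHeight.exists_isLower_repr_pos (hw : Submodule.span ℝ (range w) = ⊤)
    {ht : V →ₗ[ℝ] ℝ} (hht : ∀ i, ht (w i) = 1) (hh : IsGenericHeight w h) {x : V}
    (hx : x ∈ closedCone w) (hgen : IsGeneric w x) :
    ∃ σ : Subbasis w, σ.IsLower h ∧ ∀ i, 0 < σ.basis.repr x i := by
  obtain ⟨a, ha, hmin⟩ := exists_isMinOn_dotProduct hht h hx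
  obtain ⟨σ, hσ⟩ := Subbasis.exists_subset_of_linearCombination hw a (ha.2 ▸ hgen)
  have hlower := hh.isLower_of_isMinOn ha hmin hσ
  exact ⟨σ, hlower, fun i => (hlower.repr_nonneg_of_isMinOn ha hmin hσ i).lt_of_ne' (hgen σ i)⟩

section HalfOpenDecomposition

variable {u : V}

lemma eventually_repr_add_smul_pos_iff {κ : Type*} [Finite κ] (b : Basis κ ℝ V) (u x : V) :
    ∀ᶠ ε in 𝓝[>] (0 : ℝ),
      (∀ i, 0 < b.repr (x + ε • u) i) ↔ x ∈ halfOpenCone b (posCoords b u) := by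
  filter_upwards [eventually_all.2 fun i => eventually_add_mul_pos_iff (b.repr x i) (b.repr u i)]
    with ε hε
  simp only [halfOpenCone, posCoords, mem_ofPred_eq, map_add, map_smul, Finsupp.add_apply,
    Finsupp.smul_apply, smul_eq_mul, hε]

lemma pairwiseDisjoint_halfOpenCone (h : ι → ℝ) (u : V) :
    {σ : Subbasis w | σ.IsLower h}.PairwiseDisjoint
      fun σ => halfOpenCone σ.basis (posCoords σ.basis u) := by
  refine fun σ hσ τ hτ hne => disjoint_left.2 fun x hxσ hxτ => hne ?_
  obtain ⟨ε, hεσ, hετ⟩ := ((eventually_repr_add_smul_pos_iff σ.basis u x).and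
    (eventually_repr_add_smul_pos_iff τ.basis u x)).exists
  exact hσ.eq_of_repr_pos hτ (hεσ.2 hxσ) (hετ.2 hxτ)

lemma IsGeneric.pairwiseDisjoint_halfOpenCone_compl (hu : IsGeneric w u) (h : ι → ℝ) :
    {σ : Subbasis w | σ.IsLower h}.PairwiseDisjoint
      fun σ => halfOpenCone σ.basis (posCoords σ.basis u)ᶜ := by
  simp only [← hu.posCoords_neg]
  exact pairwiseDisjoint_halfOpenCone h (-u)

lemma Subbasis.mem_closedCone {σ : Subbasis w} {x : V} (hx : ∀ i, 0 ≤ σ.basis.repr x i) :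
    x ∈ closedCone w :=
  ⟨σ.coords x, σ.coords_nonneg hx, σ.linearCombination_coords x⟩

lemma IsGenericHeight.eventually_add_smul_mem_closedCone_iff
    (hw : Submodule.span ℝ (range w) = ⊤) {ht : V →ₗ[ℝ] ℝ} (hht : ∀ i, ht (w i) = 1)
    (hh : IsGenericHeight w h) (hu : IsGeneric w u) (x : V) :
    (∀ᶠ ε in 𝓝[>] (0 : ℝ), x + ε • u ∈ closedCone w) ↔
      ∃ σ : Subbasis w, σ.IsLower h ∧ x ∈ halfOpenCone σ.basis (posCoords σ.basis u) := by
  constructor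
  · intro hx
    obtain ⟨ε, hxε, hgen, hε⟩ := (hx.and ((hu.eventually_add_smul x).and
      (eventually_all.2 fun σ : Subbasis w =>
        eventually_repr_add_smul_pos_iff σ.basis u x))).exists
    obtain ⟨σ, hσ, hpos⟩ := hh.exists_isLower_repr_pos hw hht hxε hgen
    exact ⟨σ, hσ, (hε σ).1 hpos⟩
  · rintro ⟨σ, -, hx⟩
    filter_upwards [eventually_repr_add_smul_pos_iff σ.basis u x] with ε hε
    exact Subbasis.mem_closedCone fun i => (hε.2 hx i).le

lemma repr_nonneg_of_mem_halfOpenCone {κ : Type*} {b : Basis κ ℝ V} {A : Set κ} {x : V}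
    (hx : x ∈ halfOpenCone b A) (i : κ) : 0 ≤ b.repr x i := by
  by_cases hi : i ∈ A
  · exact (hx i).1 hi
  · exact ((hx i).2 hi).le

theorem IsGenericHeight.mem_closedCone_iff (hw : Submodule.span ℝ (range w) = ⊤)
    {ht : V →ₗ[ℝ] ℝ} (hht : ∀ i, ht (w i) = 1) (hh : IsGenericHeight w h) (hu : IsGeneric w u)
    (hu_open : u ∈ openCone w) {x : V} :
    x ∈ closedCone w ↔
      ∃ σ : Subbasis w, σ.IsLower h ∧ x ∈ halfOpenCone σ.basis (posCoords σ.basis u) := by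
  constructor
  · intro hx
    refine (hh.eventually_add_smul_mem_closedCone_iff hw hht hu x).1 ?_
    filter_upwards [self_mem_nhdsWithin] with ε (hε : 0 < ε)
    exact openCone_subset_closedCone (add_mem_openCone hx (smul_mem_openCone hε hu_open))
  · rintro ⟨σ, -, hx⟩
    exact Subbasis.mem_closedCone (repr_nonneg_of_mem_halfOpenCone hx)

-- Perturbing along `-u` removes exactly the facets that perturbing along `u` keeps.
theorem IsGenericHeight.mem_openCone_iff (hw : Submodule.span ℝ (range w) = ⊤)
    {ht : V →ₗ[ℝ] ℝ} (hht : ∀ i, ht (w i) = 1) (hh : IsGenericHeight w h) (hu : IsGeneric w u)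
    (hu_open : u ∈ openCone w) {x : V} :
    x ∈ openCone w ↔
      ∃ σ : Subbasis w, σ.IsLower h ∧ x ∈ halfOpenCone σ.basis (posCoords σ.basis u)ᶜ := by
  simp only [← hu.posCoords_neg,
    ← hh.eventually_add_smul_mem_closedCone_iff hw hht hu.neg x]
  constructor
  · obtain ⟨c, -, rfl⟩ := hu_open
    intro hx
    filter_upwards [eventually_add_smul_mem_openCone hx (-c)] with ε hε
    exact openCone_subset_closedCone (by simpa using hε)
  · intro hx
    obtain ⟨ε, hxε, hε : 0 < ε⟩ := (hx.and self_mem_nhdsWithin).exists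
    simpa using add_mem_openCone hxε (smul_mem_openCone hε hu_open)

end HalfOpenDecomposition

end RegularTriangulation

section BinomialPolynomials

variable {e h m : ℕ}

lemma eval_preHilbertPoly (e h : ℕ) (x : ℝ) :
    (preHilbertPoly ℝ e h).eval x = (e.factorial : ℝ)⁻¹ * (ascPochhammer ℝ e).eval (x - h + 1) := by
  simp [preHilbertPoly]

lemma eval_preHilbertPoly_reflect (hh : h ≤ e + 1) (x : ℝ) :
    (preHilbertPoly ℝ e (e + 1 - h)).eval x = (-1) ^ e * (preHilbertPoly ℝ e h).eval (-x) := by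
  have hneg : -x - h + 1 = -(x + h - 1) := by ring
  have hshift : x - ((e + 1 - h : ℕ) : ℝ) + 1 = x + h - 1 - e + 1 := by
    rw [Nat.cast_sub hh]; push_cast; ring
  rw [eval_preHilbertPoly, eval_preHilbertPoly, hneg, hshift,
    ascPochhammer_eval_neg_eq_descPochhammer, descPochhammer_eval_eq_ascPochhammer,
    mul_left_comm, ← mul_assoc ((-1 : ℝ) ^ e), ← mul_pow]
  simp

lemma eval_preHilbertPoly_eq_zero (hmh : m < h) (hhm : h ≤ m + e) :
    (preHilbertPoly ℝ e h).eval (m : ℝ) = 0 := by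
  have hneg : (m : ℝ) - h + 1 = -((h - m - 1 : ℕ) : ℝ) := by
    rw [Nat.cast_sub (by lia), Nat.cast_sub (by lia)]; push_cast; ring
  rw [eval_preHilbertPoly, hneg, ascPochhammer_eval_neg_coe_nat_of_lt (by lia), mul_zero]

variable {κ : Type*} [Fintype κ]

lemma finite_setOf_add_sum_eq (h m : ℕ) : {k : κ → ℕ | h + ∑ i, k i = m}.Finite := by
  classical
  refine (finite_Icc 0 fun _ => m).subset fun k (hk : h + ∑ i, k i = m) => ⟨zero_le, fun i => ?_⟩
  have := Finset.single_le_sum (fun j _ => Nat.zero_le (k j)) (Finset.mem_univ i)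
  lia

lemma ncard_setOf_add_sum_eq (hκ : Fintype.card κ = e + 1) (hhm : h ≤ m + e) :
    ({k : κ → ℕ | h + ∑ i, k i = m}.ncard : ℝ) = (preHilbertPoly ℝ e h).eval (m : ℝ) := by
  classical
  rcases lt_or_ge m h with hmh | hmh
  · rw [eval_preHilbertPoly_eq_zero hmh hhm]
    have hempty : {k : κ → ℕ | h + ∑ i, k i = m} = ∅ :=
      eq_empty_of_forall_notMem fun k (hk : h + ∑ i, k i = m) => by lia
    simp [hempty]
  · have hcoe : {k : κ → ℕ | h + ∑ i, k i = m} =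
        ↑(Finset.univ.piAntidiag (m - h) : Finset (κ → ℕ)) := by
      ext k
      simp only [mem_ofPred_eq, Finset.mem_coe, Finset.mem_piAntidiag, Finset.mem_univ,
        implies_true, and_true]
      lia
    have hcard : (Finset.univ.piAntidiag (m - h) : Finset (κ → ℕ)).card =
        (Finset.univ.finsuppAntidiag (m - h) : Finset (κ →₀ ℕ)).card := by
      simp [Finset.finsuppAntidiag]
    rw [hcoe, ncard_coe_finset, hcard,
      Finset.card_finsuppAntidiag_nat_eq_choose, preHilbertPoly_eq_choose_sub_add ℝ e hmh,
      Finset.card_univ, hκ, ← Nat.choose_symm_add]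
    congr 2
    lia

end BinomialPolynomials

section HalfOpenCone

variable {V κ : Type*} [AddCommGroup V] [Module ℝ V] {b : Basis κ ℝ V} {A : Set κ}
  {L : AddSubgroup V} {ht : V →ₗ[ℝ] ℝ} {e m : ℕ}

/-- The half-open fundamental parallelepiped of `halfOpenCone b A`. -/
def halfOpenBox (b : Basis κ ℝ V) (A : Set κ) : Set V :=
  {x | ∀ i, (i ∈ A → b.repr x i ∈ Ico 0 1) ∧ (i ∉ A → b.repr x i ∈ Ioc 0 1)}

lemma repr_mem_Icc_of_mem_halfOpenBox {y : V} (hy : y ∈ halfOpenBox b A) (i : κ) :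
    b.repr y i ∈ Icc 0 1 := by
  by_cases hi : i ∈ A
  · exact Ico_subset_Icc_self ((hy i).1 hi)
  · exact Ioc_subset_Icc_self ((hy i).2 hi)

/-- The points of `L` at height `t`, where the height is a linear functional `ht`. -/
def latticeSlice (L : AddSubgroup V) (ht : V →ₗ[ℝ] ℝ) (t : ℝ) : Set V :=
  {x | x ∈ L ∧ ht x = t}

/-- The polynomial counting the points of `L` in the slices of `halfOpenCone b A`, where the
generators `b i` are `e + 1` points of `L` of height `1`. -/
noncomputable def halfOpenConePoly (L : AddSubgroup V) (ht : V →ₗ[ℝ] ℝ) (e : ℕ) (b : Basis κ ℝ V)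
    (A : Set κ) : ℝ[X] :=
  ∑ᶠ y ∈ (L : Set V) ∩ halfOpenBox b A, preHilbertPoly ℝ e ⌊ht y⌋₊

lemma eval_halfOpenConePoly (hfin : ((L : Set V) ∩ halfOpenBox b A).Finite) (x : ℝ) :
    (halfOpenConePoly L ht e b A).eval x =
      ∑ᶠ y ∈ (L : Set V) ∩ halfOpenBox b A, (preHilbertPoly ℝ e ⌊ht y⌋₊).eval x :=
  (evalRingHom x).toAddMonoidHom.map_finsum_mem _ hfin

lemma height_eq_sum_repr [Fintype κ] (hb : ∀ i, ht (b i) = 1) (x : V) : ht x = ∑ i, b.repr x i := by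
  conv_lhs => rw [← b.sum_repr x]
  simp only [map_sum, map_smul, hb, smul_eq_mul, mul_one]

lemma height_nonneg_of_mem_halfOpenBox [Finite κ] (hb : ∀ i, ht (b i) = 1) {y : V}
    (hy : y ∈ halfOpenBox b A) : 0 ≤ ht y := by
  have := Fintype.ofFinite κ
  rw [height_eq_sum_repr hb]
  exact Finset.sum_nonneg fun i _ => (repr_mem_Icc_of_mem_halfOpenBox hy i).1

lemma natFloor_height_of_mem_halfOpenBox [Finite κ] (hb : ∀ i, ht (b i) = 1)
    (hL : ∀ x ∈ L, ∃ z : ℤ, ht x = z) {y : V} (hyL : y ∈ L) (hy : y ∈ halfOpenBox b A) :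
    (⌊ht y⌋₊ : ℝ) = ht y := by
  obtain ⟨z, hz⟩ := hL y hyL
  have hnonneg := height_nonneg_of_mem_halfOpenBox hb hy
  lift z to ℕ using by exact_mod_cast hz ▸ hnonneg
  simp [hz]

variable [Fintype κ]

lemma repr_sum_nsmul (b : Basis κ ℝ V) (k : κ → ℕ) (i : κ) :
    b.repr (∑ j, k j • b j) i = k i := by
  simp only [← Nat.cast_smul_eq_nsmul ℝ, b.repr_sum_self fun j => (k j : ℝ)]

lemma exists_sub_sum_nsmul_mem_halfOpenBox {x : V} (hx : x ∈ halfOpenCone b A) :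
    ∃ k : κ → ℕ, x - ∑ i, k i • b i ∈ halfOpenBox b A := by
  classical
  refine ⟨fun i => if i ∈ A then ⌊b.repr x i⌋₊ else ⌈b.repr x i⌉₊ - 1, fun i => ?_⟩
  simp only [map_sub, Finsupp.sub_apply, repr_sum_nsmul]
  constructor
  · intro hi
    have := Nat.floor_le ((hx i).1 hi)
    have := Nat.lt_floor_add_one (b.repr x i)
    simp only [hi, if_true, mem_Ico]
    constructor <;> linarith
  · intro hi
    have hceil : 1 ≤ ⌈b.repr x i⌉₊ := Nat.ceil_pos.2 ((hx i).2 hi)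
    have := Nat.le_ceil (b.repr x i)
    have := Nat.ceil_lt_add_one ((hx i).2 hi).le
    simp only [hi, if_false, mem_Ioc, Nat.cast_sub hceil, Nat.cast_one]
    constructor <;> linarith

lemma add_sum_nsmul_mem_halfOpenCone {y : V} (hy : y ∈ halfOpenBox b A) (k : κ → ℕ) :
    y + ∑ i, k i • b i ∈ halfOpenCone b A := by
  intro i
  have hk := Nat.cast_nonneg (α := ℝ) (k i)
  simp only [map_add, Finsupp.add_apply, repr_sum_nsmul]
  exact ⟨fun hi => add_nonneg ((hy i).1 hi).1 hk,
    fun hi => add_pos_of_pos_of_nonneg ((hy i).2 hi).1 hk⟩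

lemma eq_of_add_sum_nsmul_eq {y z : V} (hy : y ∈ halfOpenBox b A) (hz : z ∈ halfOpenBox b A)
    {k l : κ → ℕ} (h : y + ∑ i, k i • b i = z + ∑ i, l i • b i) : k = l := by
  funext i
  have hi : b.repr y i + k i = b.repr z i + l i := by
    simpa only [map_add, Finsupp.add_apply, repr_sum_nsmul] using
      DFunLike.congr_fun (congrArg b.repr h) i
  have habs : |b.repr y i - b.repr z i| < 1 := by
    by_cases hA : i ∈ A
    · have := (hy i).1 hA
      have := (hz i).1 hA
      grind [abs_lt]
    · have := (hy i).2 hA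
      have := (hz i).2 hA
      grind [abs_lt]
  have hkl : |(k i : ℤ) - l i| < 1 := by
    have : |(l i : ℝ) - k i| < 1 := by
      rwa [← (by linarith : b.repr y i - b.repr z i = l i - k i)]
    rw [abs_sub_comm]
    exact_mod_cast this
  rw [Int.abs_lt_one_iff] at hkl
  lia

lemma sum_sub_mem_halfOpenBox_compl {y : V} (hy : y ∈ halfOpenBox b A) :
    ∑ i, b i - y ∈ halfOpenBox b Aᶜ := by
  intro i
  have hsum : b.repr (∑ j, b j) i = 1 := by simp
  have := hy i
  simp only [map_sub, Finsupp.sub_apply, hsum, mem_compl_iff]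
  grind

lemma height_le_card_of_mem_halfOpenBox (hb : ∀ i, ht (b i) = 1) {y : V}
    (hy : y ∈ halfOpenBox b A) : ht y ≤ Fintype.card κ := by
  rw [height_eq_sum_repr hb]
  simpa using Finset.sum_le_card_nsmul Finset.univ _ 1
    fun i _ => (repr_mem_Icc_of_mem_halfOpenBox hy i).2

lemma height_lt_card_of_mem_halfOpenBox (hb : ∀ i, ht (b i) = 1) (hA : A.Nonempty) {y : V}
    (hy : y ∈ halfOpenBox b A) : ht y < Fintype.card κ := by
  obtain ⟨i, hi⟩ := hA
  have hlt : ∑ i, b.repr y i < ∑ _i : κ, (1 : ℝ) :=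
    Finset.sum_lt_sum (fun j _ => (repr_mem_Icc_of_mem_halfOpenBox hy j).2)
      ⟨i, Finset.mem_univ i, ((hy i).1 hi).2⟩
  simpa [height_eq_sum_repr hb] using hlt

lemma latticeSlice_inter_halfOpenCone (hb : ∀ i, ht (b i) = 1) (hbL : ∀ i, b i ∈ L)
    (hL : ∀ x ∈ L, ∃ z : ℤ, ht x = z) (m : ℕ) :
    latticeSlice L ht m ∩ halfOpenCone b A = ⋃ y ∈ (L : Set V) ∩ halfOpenBox b A,
      (fun k : κ → ℕ => y + ∑ i, k i • b i) '' {k | ⌊ht y⌋₊ + ∑ i, k i = m} := by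
  have hsum (k : κ → ℕ) : ∑ i, k i • b i ∈ L := sum_mem fun i _ => nsmul_mem (hbL i) _
  have hht (k : κ → ℕ) : ht (∑ i, k i • b i) = (∑ i, k i : ℕ) := by simp [hb]
  ext x
  simp only [mem_iUnion₂, mem_image, mem_ofPred_eq]
  constructor
  · rintro ⟨⟨hxL, hx⟩, hxA⟩
    obtain ⟨k, hk⟩ := exists_sub_sum_nsmul_mem_halfOpenBox hxA
    have hyL := sub_mem hxL (hsum k)
    refine ⟨_, ⟨hyL, hk⟩, k, ?_, sub_add_cancel _ _⟩
    rw [← Nat.cast_inj (R := ℝ), Nat.cast_add, natFloor_height_of_mem_halfOpenBox hb hL hyL hk,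
      map_sub, hht, sub_add_cancel, hx]
  · rintro ⟨y, ⟨hyL, hy⟩, k, hk, rfl⟩
    refine ⟨⟨add_mem hyL (hsum k), ?_⟩, add_sum_nsmul_mem_halfOpenCone hy k⟩
    rw [map_add, hht, ← natFloor_height_of_mem_halfOpenBox hb hL hyL hy, ← hk]
    push_cast
    rfl

lemma ncard_latticeSlice_inter_halfOpenCone (hb : ∀ i, ht (b i) = 1) (hbL : ∀ i, b i ∈ L)
    (hL : ∀ x ∈ L, ∃ z : ℤ, ht x = z) (hfin : ((L : Set V) ∩ halfOpenBox b A).Finite) (m : ℕ) :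
    (latticeSlice L ht m ∩ halfOpenCone b A).ncard =
      ∑ᶠ y ∈ (L : Set V) ∩ halfOpenBox b A, {k : κ → ℕ | ⌊ht y⌋₊ + ∑ i, k i = m}.ncard := by
  rw [latticeSlice_inter_halfOpenCone hb hbL hL, hfin.ncard_biUnion]
  · refine finsum_mem_congr rfl fun y hy => InjOn.ncard_image fun k _ l _ hkl => ?_
    exact eq_of_add_sum_nsmul_eq hy.2 hy.2 hkl
  · exact fun y _ => (finite_setOf_add_sum_eq _ m).image _
  · rintro y hy z hz hyz
    refine disjoint_left.2 ?_
    rintro _ ⟨k, -, rfl⟩ ⟨l, -, hkl⟩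
    have := eq_of_add_sum_nsmul_eq hz.2 hy.2 hkl
    subst this
    exact hyz (add_right_cancel hkl).symm

theorem eval_natCast_halfOpenConePoly (hκ : Fintype.card κ = e + 1) (hb : ∀ i, ht (b i) = 1)
    (hbL : ∀ i, b i ∈ L) (hL : ∀ x ∈ L, ∃ z : ℤ, ht x = z)
    (hfin : ((L : Set V) ∩ halfOpenBox b A).Finite) (hmA : A.Nonempty ∨ 1 ≤ m) :
    (halfOpenConePoly L ht e b A).eval (m : ℝ) =
      (latticeSlice L ht m ∩ halfOpenCone b A).ncard := by
  rw [eval_halfOpenConePoly hfin, ncard_latticeSlice_inter_halfOpenCone hb hbL hL hfin,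
    Nat.cast_finsum_mem hfin]
  refine finsum_mem_congr rfl fun y hy => (ncard_setOf_add_sum_eq hκ ?_).symm
  have hfloor := natFloor_height_of_mem_halfOpenBox hb hL hy.1 hy.2
  rcases hmA with hA | hm
  · have hlt := height_lt_card_of_mem_halfOpenBox hb hA hy.2
    rw [← hfloor, hκ, Nat.cast_lt] at hlt
    lia
  · have hle := height_le_card_of_mem_halfOpenBox hb hy.2
    rw [← hfloor, hκ, Nat.cast_le] at hle
    lia

lemma bijOn_sum_sub_halfOpenBox (hbL : ∀ i, b i ∈ L) :
    BijOn (∑ i, b i - ·) ((L : Set V) ∩ halfOpenBox b A) ((L : Set V) ∩ halfOpenBox b Aᶜ) := by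
  have hsum : ∑ i, b i ∈ L := sum_mem fun i _ => hbL i
  refine InvOn.bijOn (f' := (∑ i, b i - ·)) ⟨fun y _ => ?_, fun y _ => ?_⟩ (fun y hy => ?_)
    fun y hy => ?_
  · exact sub_sub_cancel _ _
  · exact sub_sub_cancel _ _
  · exact ⟨sub_mem hsum hy.1, sum_sub_mem_halfOpenBox_compl hy.2⟩
  · refine ⟨sub_mem hsum hy.1, ?_⟩
    simpa only [compl_compl] using sum_sub_mem_halfOpenBox_compl hy.2

theorem eval_halfOpenConePoly_compl (hκ : Fintype.card κ = e + 1) (hb : ∀ i, ht (b i) = 1)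
    (hbL : ∀ i, b i ∈ L) (hL : ∀ x ∈ L, ∃ z : ℤ, ht x = z)
    (hfin : ((L : Set V) ∩ halfOpenBox b A).Finite) (x : ℝ) :
    (halfOpenConePoly L ht e b Aᶜ).eval x =
      (-1) ^ e * (halfOpenConePoly L ht e b A).eval (-x) := by
  have hbij := bijOn_sum_sub_halfOpenBox (A := A) hbL
  rw [eval_halfOpenConePoly hfin, eval_halfOpenConePoly (hbij.image_eq ▸ hfin.image _),
    mul_finsum_mem' _ _ hfin]
  refine (finsum_mem_eq_of_bijOn _ hbij fun y hy => ?_).symm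
  have hfloor := natFloor_height_of_mem_halfOpenBox hb hL hy.1 hy.2
  have hle : ⌊ht y⌋₊ ≤ e + 1 := by
    have hle := height_le_card_of_mem_halfOpenBox hb hy.2
    rw [← hfloor, hκ] at hle
    exact_mod_cast hle
  have hcompl : ht (∑ i, b i - y) = (e + 1 - ⌊ht y⌋₊ : ℕ) := by
    rw [map_sub, Nat.cast_sub hle, hfloor]
    simp [hb, hκ]
  rw [hcompl, Nat.floor_natCast, eval_preHilbertPoly_reflect hle]

end HalfOpenCone

section ConeReciprocity

variable {V ι : Type*} [AddCommGroup V] [Module ℝ V] [Fintype ι] {w : ι → V} {ht : V →ₗ[ℝ] ℝ}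
  {L : AddSubgroup V} {h : ι → ℝ} {u : V} {e m : ℕ}

lemma halfOpenBox_subset_closedCone (σ : Subbasis w) (A : Set σ.1) :
    halfOpenBox σ.basis A ⊆ closedCone w := fun _ hy =>
  Subbasis.mem_closedCone fun i => (repr_mem_Icc_of_mem_halfOpenBox hy i).1

lemma finite_inter_halfOpenBox (hht : ∀ i, ht (w i) = 1) (hL : ∀ x ∈ L, ∃ z : ℤ, ht x = z)
    (hfin : ∀ m : ℕ, (latticeSlice L ht m ∩ closedCone w).Finite) (σ : Subbasis w)
    (A : Set σ.1) : ((L : Set V) ∩ halfOpenBox σ.basis A).Finite := by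
  have : Fintype σ.1 := Fintype.ofFinite _
  have hb (i : σ.1) : ht (σ.basis i) = 1 := by rw [σ.basis_apply, hht]
  refine ((finite_Iic (Fintype.card σ.1)).biUnion fun m _ => hfin m).subset fun y hy => ?_
  have hfloor := natFloor_height_of_mem_halfOpenBox hb hL hy.1 hy.2
  have hle := height_le_card_of_mem_halfOpenBox hb hy.2
  rw [← hfloor, Nat.cast_le] at hle
  exact mem_biUnion (mem_Iic.2 hle) ⟨⟨hy.1, hfloor.symm⟩, halfOpenBox_subset_closedCone σ A hy.2⟩

lemma nonempty_posCoords {κ : Type*} [Finite κ] [Nonempty κ] {b : Basis κ ℝ V}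
    (hb : ∀ i, ht (b i) = 1) (hu : 0 ≤ ht u) (hne : ∀ i, b.repr u i ≠ 0) :
    (posCoords b u).Nonempty := by
  have := Fintype.ofFinite κ
  by_contra! hempty
  have hneg (i : κ) : b.repr u i < 0 :=
    (hne i).lt_of_le (not_lt.1 fun hi => (hempty ▸ hi : i ∈ (∅ : Set κ)))
  have hlt : ∑ i, b.repr u i < ∑ _i : κ, (0 : ℝ) :=
    Finset.sum_lt_sum_of_nonempty Finset.univ_nonempty fun i _ => hneg i
  rw [← height_eq_sum_repr hb, Finset.sum_const_zero] at hlt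
  exact hlt.not_ge hu

lemma height_nonneg_of_mem_closedCone (hht : ∀ i, ht (w i) = 1) {x : V} (hx : x ∈ closedCone w) :
    0 ≤ ht x := by
  obtain ⟨a, ha, rfl⟩ := hx
  rw [height_linearCombination hht]
  exact Finset.sum_nonneg fun i _ => ha i

lemma ncard_inter_eq_finsum {C : Set V} (A : ∀ σ : Subbasis w, Set σ.1)
    (hC : ∀ x, x ∈ C ↔ ∃ σ : Subbasis w, σ.IsLower h ∧ x ∈ halfOpenCone σ.basis (A σ))
    (hdisj : {σ : Subbasis w | σ.IsLower h}.PairwiseDisjoint fun σ => halfOpenCone σ.basis (A σ))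
    {S : Set V} (hS : (S ∩ C).Finite) :
    (S ∩ C).ncard =
      ∑ᶠ σ ∈ {σ : Subbasis w | σ.IsLower h}, (S ∩ halfOpenCone σ.basis (A σ)).ncard := by
  have hunion : S ∩ C = ⋃ σ ∈ {σ : Subbasis w | σ.IsLower h}, S ∩ halfOpenCone σ.basis (A σ) := by
    ext x
    simp [hC]
  rw [hunion, (toFinite _).ncard_biUnion]
  · exact fun σ hσ => hS.subset fun x hx => ⟨hx.1, (hC x).2 ⟨σ, hσ, hx.2⟩⟩
  · exact hdisj.mono fun σ => inter_subset_right

lemma eval_finsum_halfOpenConePoly (h : ι → ℝ) (A : ∀ σ : Subbasis w, Set σ.1) (x : ℝ) :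
    (∑ᶠ σ ∈ {σ : Subbasis w | σ.IsLower h}, halfOpenConePoly L ht e σ.basis (A σ)).eval x =
      ∑ᶠ σ ∈ {σ : Subbasis w | σ.IsLower h}, (halfOpenConePoly L ht e σ.basis (A σ)).eval x :=
  (evalRingHom x).toAddMonoidHom.map_finsum_mem _ (toFinite _)

lemma eval_natCast_finsum_halfOpenConePoly (hV : finrank ℝ V = e + 1) (hht : ∀ i, ht (w i) = 1)
    (hwL : ∀ i, w i ∈ L) (hL : ∀ x ∈ L, ∃ z : ℤ, ht x = z)
    (hfin : ∀ m : ℕ, (latticeSlice L ht m ∩ closedCone w).Finite) {C : Set V}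
    (hCw : C ⊆ closedCone w) (A : ∀ σ : Subbasis w, Set σ.1)
    (hC : ∀ x, x ∈ C ↔ ∃ σ : Subbasis w, σ.IsLower h ∧ x ∈ halfOpenCone σ.basis (A σ))
    (hdisj : {σ : Subbasis w | σ.IsLower h}.PairwiseDisjoint fun σ => halfOpenCone σ.basis (A σ))
    (hmA : ∀ σ, (A σ).Nonempty ∨ 1 ≤ m) :
    (∑ᶠ σ ∈ {σ : Subbasis w | σ.IsLower h}, halfOpenConePoly L ht e σ.basis (A σ)).eval (m : ℝ) =
      (latticeSlice L ht m ∩ C).ncard := by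
  rw [eval_finsum_halfOpenConePoly, ncard_inter_eq_finsum A hC hdisj
    ((hfin m).subset (inter_subset_inter_right _ hCw)), Nat.cast_finsum_mem (toFinite _)]
  refine finsum_mem_congr rfl fun σ _ => ?_
  have : Fintype σ.1 := Fintype.ofFinite _
  exact eval_natCast_halfOpenConePoly (hV ▸ finrank_eq_card_basis σ.basis).symm
    (fun i => by rw [σ.basis_apply, hht]) (fun i => by rw [σ.basis_apply]; exact hwL i) hL
    (finite_inter_halfOpenBox hht hL hfin σ _) (hmA σ)

theorem exists_polynomial_ncard_latticeSlice_inter_cone (hw : Submodule.span ℝ (range w) = ⊤)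
    (hV : finrank ℝ V = e + 1) (hht : ∀ i, ht (w i) = 1) (hwL : ∀ i, w i ∈ L)
    (hL : ∀ x ∈ L, ∃ z : ℤ, ht x = z)
    (hfin : ∀ m : ℕ, (latticeSlice L ht m ∩ closedCone w).Finite) :
    ∃ p : ℝ[X], (∀ m : ℕ, p.eval (m : ℝ) = (latticeSlice L ht m ∩ closedCone w).ncard) ∧
      ∀ m : ℕ, 1 ≤ m →
        p.eval (-m : ℝ) = (-1) ^ e * (latticeSlice L ht m ∩ openCone w).ncard := by
  obtain ⟨h, hh⟩ := exists_isGenericHeight w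
  obtain ⟨u, hu_open, hu⟩ := exists_isGeneric_mem_openCone w
  have : ∀ σ : Subbasis w, Fintype σ.1 := fun σ => Fintype.ofFinite _
  have hcard (σ : Subbasis w) : Fintype.card σ.1 = e + 1 :=
    (hV ▸ finrank_eq_card_basis σ.basis).symm
  have hb (σ : Subbasis w) (i : σ.1) : ht (σ.basis i) = 1 := by rw [σ.basis_apply, hht]
  have hbL (σ : Subbasis w) (i : σ.1) : σ.basis i ∈ L := by rw [σ.basis_apply]; exact hwL i
  refine ⟨∑ᶠ σ ∈ {σ : Subbasis w | σ.IsLower h},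
    halfOpenConePoly L ht e σ.basis (posCoords σ.basis u), fun m => ?_, fun m hm => ?_⟩
  · refine eval_natCast_finsum_halfOpenConePoly hV hht hwL hL hfin subset_rfl _
      (fun x => hh.mem_closedCone_iff hw hht hu hu_open) (pairwiseDisjoint_halfOpenCone h u)
      fun σ => .inl ?_
    have : Nonempty σ.1 := Fintype.card_pos_iff.1 (by rw [hcard]; exact e.succ_pos)
    exact nonempty_posCoords (hb σ)
      (height_nonneg_of_mem_closedCone hht (openCone_subset_closedCone hu_open)) (hu σ)
  · rw [← eval_natCast_finsum_halfOpenConePoly hV hht hwL hL hfin openCone_subset_closedCone _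
      (fun x => hh.mem_openCone_iff hw hht hu hu_open)
      (hu.pairwiseDisjoint_halfOpenCone_compl h)
      fun _ => .inr hm, eval_finsum_halfOpenConePoly, eval_finsum_halfOpenConePoly,
      mul_finsum_mem' _ _ (toFinite _)]
    refine finsum_mem_congr rfl fun σ _ => ?_
    rw [eval_halfOpenConePoly_compl (hcard σ) (hb σ) (hbL σ) hL
      (finite_inter_halfOpenBox hht hL hfin σ _), ← mul_assoc, ← mul_pow]
    simp

end ConeReciprocity

section ConvexHulls

variable {E ι : Type*} [AddCommGroup E] [Module ℝ E] [Fintype ι]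

/-- The weights `a ≥ 0` of total mass `t`: the `t`-fold dilation of the standard simplex. -/
def massSimplex (ι : Type*) [Fintype ι] (t : ℝ) : Set (ι → ℝ) :=
  {a | (∀ i, 0 ≤ a i) ∧ ∑ i, a i = t}

/-- The positive weights of total mass `t`: the relative interior of `massSimplex ι t` for
`0 < t`. -/
def openMassSimplex (ι : Type*) [Fintype ι] (t : ℝ) : Set (ι → ℝ) :=
  {a | (∀ i, 0 < a i) ∧ ∑ i, a i = t}

lemma smul_massSimplex_one [Nonempty ι] {t : ℝ} (ht : 0 ≤ t) :
    t • massSimplex ι 1 = massSimplex ι t := by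
  classical
  refine Subset.antisymm ?_ fun a ⟨ha, hat⟩ => ?_
  · rintro _ ⟨a, ⟨ha, ha1⟩, rfl⟩
    exact ⟨fun i => mul_nonneg ht (ha i), by simp [← Finset.mul_sum, ha1]⟩
  rcases ht.eq_or_lt with rfl | ht
  · obtain ⟨j⟩ := ‹Nonempty ι›
    have ha0 : a = 0 := funext fun i =>
      (Finset.sum_eq_zero_iff_of_nonneg fun i _ => ha i).1 hat i (Finset.mem_univ i)
    exact ⟨Pi.single j 1, single_mem_stdSimplex ℝ j, by simp [ha0]⟩
  · refine (mem_smul_set_iff_inv_smul_mem₀ ht.ne' _ _).2 ⟨fun i => ?_, ?_⟩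
    · exact mul_nonneg (inv_nonneg.2 ht.le) (ha i)
    · simp [← Finset.mul_sum, hat, ht.ne']

lemma smul_openMassSimplex_one {t : ℝ} (ht : 0 < t) :
    t • openMassSimplex ι 1 = openMassSimplex ι t := by
  ext a
  simp [mem_smul_set_iff_inv_smul_mem₀ ht.ne', openMassSimplex, ← Finset.mul_sum, ht,
    inv_mul_eq_one₀ ht.ne', eq_comm]

lemma lineMap_mem_openMassSimplex {a b : ι → ℝ} (ha : a ∈ openMassSimplex ι 1)
    (hb : b ∈ massSimplex ι 1) {r : ℝ} (hr₀ : 0 ≤ r) (hr₁ : r < 1) :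
    AffineMap.lineMap a b r ∈ openMassSimplex ι 1 := by
  rw [AffineMap.lineMap_apply_module]
  refine ⟨fun i => add_pos_of_pos_of_nonneg (mul_pos (sub_pos.2 hr₁) (ha.1 i))
    (mul_nonneg hr₀ (hb.1 i)), ?_⟩
  simp [Finset.sum_add_distrib, ← Finset.mul_sum, ha.2, hb.2]

lemma nonempty_openMassSimplex [Nonempty ι] : (openMassSimplex ι 1).Nonempty :=
  ⟨fun _ => (Fintype.card ι : ℝ)⁻¹, fun _ => by positivity, by simp⟩

lemma openMassSimplex_subset_massSimplex (t : ℝ) : openMassSimplex ι t ⊆ massSimplex ι t :=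
  fun _ ha => ⟨fun i => (ha.1 i).le, ha.2⟩

lemma convexHull_range_eq_image_massSimplex (v : ι → E) :
    convexHull ℝ (range v) = Fintype.linearCombination ℝ v '' massSimplex ι 1 := by
  classical
  change _ = Fintype.linearCombination ℝ v '' stdSimplex ℝ ι
  rw [← convexHull_rangle_single_eq_stdSimplex, LinearMap.image_convexHull, ← range_comp]
  congr 2
  ext i
  simp

lemma linearCombination_mem_convexHull_range (v : ι → E) {a : ι → ℝ} (ha : a ∈ massSimplex ι 1) :
    Fintype.linearCombination ℝ v a ∈ convexHull ℝ (range v) :=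
  convexHull_range_eq_image_massSimplex v ▸ mem_image_of_mem _ ha

lemma smul_convexHull_range [Nonempty ι] (v : ι → E) {t : ℝ} (ht : 0 ≤ t) :
    t • convexHull ℝ (range v) = Fintype.linearCombination ℝ v '' massSimplex ι t := by
  rw [convexHull_range_eq_image_massSimplex, ← image_smul_set, smul_massSimplex_one ht]

end ConvexHulls

section Homogenization

variable {E ι : Type*} [AddCommGroup E] [Module ℝ E]

/-- The linear span of the cone over the points `v i`, placed at height `1` in `E × ℝ`. -/
def coneSpan (v : ι → E) : Submodule ℝ (E × ℝ) :=
  Submodule.span ℝ (range fun i => (v i, (1 : ℝ)))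

/-- The generators `(v i, 1)` of the cone over the points `v i`. -/
def coneGenerator (v : ι → E) (i : ι) : coneSpan v :=
  ⟨(v i, 1), Submodule.subset_span (mem_range_self i)⟩

/-- The height function `(x, t) ↦ t` on the span of the cone. -/
def coneHeight (v : ι → E) : coneSpan v →ₗ[ℝ] ℝ :=
  LinearMap.snd ℝ E ℝ ∘ₗ (coneSpan v).subtype

/-- The points of `Λ × ℤ` in the span of the cone. -/
def coneLattice (v : ι → E) (Λ : AddSubgroup E) : AddSubgroup (coneSpan v) :=
  (Λ.prod (Int.castAddHom ℝ).range).comap (coneSpan v).subtype.toAddMonoidHom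

variable {v : ι → E} {Λ : AddSubgroup E}

lemma span_range_coneGenerator (v : ι → E) : Submodule.span ℝ (range (coneGenerator v)) = ⊤ := by
  refine Submodule.map_injective_of_injective (coneSpan v).injective_subtype ?_
  rw [Submodule.map_span, ← range_comp, Submodule.map_subtype_top]
  rfl

lemma coneHeight_coneGenerator (i : ι) : coneHeight v (coneGenerator v i) = 1 := rfl

lemma coneGenerator_mem_coneLattice (hv : ∀ i, v i ∈ Λ) (i : ι) :
    coneGenerator v i ∈ coneLattice v Λ :=
  ⟨hv i, 1, Int.cast_one⟩

lemma exists_coneHeight_eq_intCast {x : coneSpan v} (hx : x ∈ coneLattice v Λ) :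
    ∃ z : ℤ, coneHeight v x = z := by
  obtain ⟨-, z, hz⟩ := hx
  exact ⟨z, hz.symm⟩

lemma mk_one_mem_coneSpan {x : E} (hx : x ∈ affineSpan ℝ (range v)) :
    (x, (1 : ℝ)) ∈ coneSpan v := by
  let f : E →ᵃ[ℝ] E × ℝ := (AffineMap.id ℝ E).prod (AffineMap.const ℝ E 1)
  have hle : affineSpan ℝ (range v) ≤ (coneSpan v).toAffineSubspace.comap f :=
    affineSpan_le.2 (range_subset_iff.2 fun i => (coneGenerator v i).2)
  exact hle hx

lemma injOn_fst_latticeSlice (v : ι → E) (L : AddSubgroup (coneSpan v)) (t : ℝ) :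
    InjOn (fun x : coneSpan v => (x : E × ℝ).1) (latticeSlice L (coneHeight v) t) :=
  fun _ hx _ hy hxy => Subtype.ext (Prod.ext hxy (hx.2.trans hy.2.symm))

lemma finrank_coneSpan [Finite ι] [Nonempty ι] (v : ι → E) :
    finrank ℝ (coneSpan v) = finrank ℝ (vectorSpan ℝ (range v)) + 1 := by
  obtain ⟨j⟩ := ‹Nonempty ι›
  set D := (vectorSpan ℝ (range v)).map (LinearMap.inl ℝ E ℝ) with hD
  have hsup : coneSpan v = D ⊔ ℝ ∙ (v j, (1 : ℝ)) := by
    apply le_antisymm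
    · refine Submodule.span_le.2 (range_subset_iff.2 fun i => Submodule.mem_sup.2 ?_)
      refine ⟨(v i - v j, 0), Submodule.mem_map_of_mem (f := LinearMap.inl ℝ E ℝ) ?_, (v j, 1),
        Submodule.mem_span_singleton_self _, by simp⟩
      exact vsub_mem_vectorSpan ℝ (mem_range_self i) (mem_range_self j)
    · rw [hD, vectorSpan_range_eq_span_range_vsub_right ℝ v j, Submodule.map_span, sup_le_iff,
        Submodule.span_le, Submodule.span_singleton_le_iff_mem]
      refine ⟨?_, (coneGenerator v j).2⟩
      rintro _ ⟨_, ⟨i, rfl⟩, rfl⟩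
      simpa [coneGenerator] using (coneGenerator v i - coneGenerator v j).2
  have hdisj : Disjoint D (ℝ ∙ (v j, (1 : ℝ))) := by
    refine Submodule.disjoint_span_singleton.2 ?_
    rintro ⟨x, -, hx⟩
    simpa using congrArg Prod.snd hx
  have := finiteDimensional_vectorSpan_range ℝ v
  have hfinrank := Submodule.finrank_sup_add_finrank_inf_eq D (ℝ ∙ (v j, (1 : ℝ)))
  rw [hdisj.eq_bot, finrank_bot, add_zero, finrank_span_singleton (by simp)] at hfinrank
  rw [hsup, hfinrank, (Submodule.equivMapOfInjective (LinearMap.inl ℝ E ℝ)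
    LinearMap.inl_injective _).finrank_eq]

variable [Fintype ι]

lemma coe_linearCombination_coneGenerator (v : ι → E) (a : ι → ℝ) :
    (Fintype.linearCombination ℝ (coneGenerator v) a : E × ℝ) =
      (Fintype.linearCombination ℝ v a, ∑ i, a i) := by
  simp [Fintype.linearCombination_apply, coneGenerator, Prod.ext_iff, Prod.fst_sum, Prod.snd_sum]

lemma image_fst_latticeSlice_inter_image (v : ι → E) (Λ : AddSubgroup E) (m : ℕ)
    (P : Set (ι → ℝ)) :
    (fun x : coneSpan v => (x : E × ℝ).1) '' (latticeSlice (coneLattice v Λ) (coneHeight v) m ∩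
        Fintype.linearCombination ℝ (coneGenerator v) '' P) =
      (Λ : Set E) ∩ Fintype.linearCombination ℝ v '' {a ∈ P | ∑ i, a i = m} := by
  ext x
  constructor
  · rintro ⟨_, ⟨⟨hxΛ, hxm⟩, a, ha, rfl⟩, rfl⟩
    have hcoe := coe_linearCombination_coneGenerator v a
    exact ⟨hxΛ.1, a, ⟨ha, (congrArg Prod.snd hcoe).symm.trans hxm⟩, (congrArg Prod.fst hcoe).symm⟩
  · rintro ⟨hxΛ, a, ⟨ha, ham⟩, rfl⟩
    have hcoe := coe_linearCombination_coneGenerator v a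
    rw [ham] at hcoe
    refine ⟨_, ⟨⟨⟨?_, m, ?_⟩, congrArg Prod.snd hcoe⟩, a, ha, rfl⟩, congrArg Prod.fst hcoe⟩
    · exact (congrArg Prod.fst hcoe).symm ▸ hxΛ
    · exact (Int.cast_natCast m).trans (congrArg Prod.snd hcoe).symm

end Homogenization

section RelativeInterior

variable {E ι : Type*} [AddCommGroup E] [Module ℝ E] [TopologicalSpace E]
  [IsTopologicalAddGroup E] [ContinuousSMul ℝ E] [Fintype ι] {v : ι → E}

lemma exists_mem_openMassSimplex_of_mem_intrinsicInterior {x : E}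
    (hx : x ∈ intrinsicInterior ℝ (convexHull ℝ (range v))) :
    ∃ a ∈ openMassSimplex ι 1, Fintype.linearCombination ℝ v a = x := by
  have hne : Nonempty ι := range_nonempty_iff_nonempty.1
    (convexHull_nonempty_iff.1 ⟨x, intrinsicInterior_subset hx⟩)
  obtain ⟨b, hb⟩ := nonempty_openMassSimplex (ι := ι)
  set c := Fintype.linearCombination ℝ v b with hbc
  have hc : c ∈ convexHull ℝ (range v) :=
    linearCombination_mem_convexHull_range v (openMassSimplex_subset_massSimplex 1 hb)
  obtain ⟨x, hxint, rfl⟩ := mem_intrinsicInterior.1 hx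
  let g (t : ℝ) : affineSpan ℝ (convexHull ℝ (range v)) :=
    ⟨AffineMap.lineMap c x.1 t, AffineMap.lineMap_mem t (subset_affineSpan ℝ _ hc) x.2⟩
  have hg : Tendsto g (𝓝 1) (𝓝 x) := by
    have hcont : Continuous g := AffineMap.lineMap_continuous.subtype_mk _
    simpa only [g, AffineMap.lineMap_apply_one] using hcont.tendsto 1
  obtain ⟨t, htx, ht : 1 < t⟩ := (((hg.eventually (mem_interior_iff_mem_nhds.1 hxint)).filter_mono
    nhdsWithin_le_nhds).and (self_mem_nhdsWithin (s := Ioi 1))).exists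
  obtain ⟨d, hd, hdt⟩ := (convexHull_range_eq_image_massSimplex v).le htx
  refine ⟨AffineMap.lineMap b d t⁻¹,
    lineMap_mem_openMassSimplex hb hd (by positivity) (inv_lt_one_of_one_lt₀ ht), ?_⟩
  rw [← LinearMap.coe_toAffineMap, AffineMap.apply_lineMap, LinearMap.coe_toAffineMap, hdt, ← hbc,
    AffineMap.lineMap_lineMap_right, inv_mul_cancel₀ (by positivity), AffineMap.lineMap_apply_one]

lemma isOpen_openCone_coneGenerator [T2Space E] (v : ι → E) :
    IsOpen (openCone (coneGenerator v)) := by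
  have : FiniteDimensional ℝ (coneSpan v) := FiniteDimensional.span_of_finite ℝ (finite_range _)
  refine (Fintype.linearCombination ℝ (coneGenerator v)).isOpenMap_of_finiteDimensional ?_ _ ?_
  · rw [← LinearMap.range_eq_top, Fintype.range_linearCombination, span_range_coneGenerator]
  · simp only [ofPred_forall]
    exact isOpen_iInter_of_finite fun i => isOpen_lt continuous_const (continuous_apply i)

lemma linearCombination_mem_intrinsicInterior [T2Space E] {a : ι → ℝ}
    (ha : a ∈ openMassSimplex ι 1) :
    Fintype.linearCombination ℝ v a ∈ intrinsicInterior ℝ (convexHull ℝ (range v)) := by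
  let lift (y : affineSpan ℝ (convexHull ℝ (range v))) : coneSpan v :=
    ⟨(y, 1), mk_one_mem_coneSpan (affineSpan_convexHull (𝕜 := ℝ) (range v) ▸ y.2)⟩
  have hlift : Continuous lift := by fun_prop
  have hmem :=
    linearCombination_mem_convexHull_range v (openMassSimplex_subset_massSimplex 1 ha)
  refine mem_intrinsicInterior.2 ⟨⟨_, subset_affineSpan ℝ _ hmem⟩, ?_, rfl⟩
  refine mem_interior.2 ⟨lift ⁻¹' openCone (coneGenerator v), ?_,
    (isOpen_openCone_coneGenerator v).preimage hlift, a, ha.1, ?_⟩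
  · rintro y ⟨c, hc, hcy⟩
    have hcoe := (coe_linearCombination_coneGenerator v c).symm.trans (congrArg Subtype.val hcy)
    have hyc : Fintype.linearCombination ℝ v c = y := congrArg Prod.fst hcoe
    rw [mem_preimage, ← hyc]
    exact linearCombination_mem_convexHull_range v ⟨fun i => (hc i).le, congrArg Prod.snd hcoe⟩
  · exact Subtype.ext ((coe_linearCombination_coneGenerator v a).trans (by rw [ha.2]))

theorem intrinsicInterior_convexHull_range [T2Space E] (v : ι → E) :
    intrinsicInterior ℝ (convexHull ℝ (range v)) =
      Fintype.linearCombination ℝ v '' openMassSimplex ι 1 :=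
  Subset.antisymm (fun _ hx => exists_mem_openMassSimplex_of_mem_intrinsicInterior hx)
    (image_subset_iff.2 fun _ ha => linearCombination_mem_intrinsicInterior ha)

lemma smul_intrinsicInterior_convexHull_range [T2Space E] (v : ι → E) {t : ℝ} (ht : 0 < t) :
    t • intrinsicInterior ℝ (convexHull ℝ (range v)) =
      Fintype.linearCombination ℝ v '' openMassSimplex ι t := by
  rw [intrinsicInterior_convexHull_range, ← image_smul_set, smul_openMassSimplex_one ht]

end RelativeInterior

section Ehrhart

variable {E ι : Type*} [AddCommGroup E] [Module ℝ E] [Fintype ι]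

lemma ncard_latticeSlice_inter_closedCone [Nonempty ι] (v : ι → E) (Λ : AddSubgroup E) (m : ℕ) :
    (latticeSlice (coneLattice v Λ) (coneHeight v) m ∩ closedCone (coneGenerator v)).ncard =
      ((Λ : Set E) ∩ (m : ℝ) • convexHull ℝ (range v)).ncard := by
  rw [smul_convexHull_range v m.cast_nonneg,
    ← ((injOn_fst_latticeSlice v _ m).mono inter_subset_left).ncard_image, closedCone,
    image_fst_latticeSlice_inter_image]
  rfl

variable [TopologicalSpace E] [IsTopologicalAddGroup E] [ContinuousSMul ℝ E] [T2Space E]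

lemma ncard_latticeSlice_inter_openCone (v : ι → E) (Λ : AddSubgroup E) {m : ℕ} (hm : 1 ≤ m) :
    (latticeSlice (coneLattice v Λ) (coneHeight v) m ∩ openCone (coneGenerator v)).ncard =
      ((Λ : Set E) ∩ (m : ℝ) • intrinsicInterior ℝ (convexHull ℝ (range v))).ncard := by
  rw [smul_intrinsicInterior_convexHull_range v (by exact_mod_cast hm),
    ← ((injOn_fst_latticeSlice v _ m).mono inter_subset_left).ncard_image, openCone,
    image_fst_latticeSlice_inter_image]
  rfl

lemma finite_inter_smul_convexHull (Λ : AddSubgroup E) [DiscreteTopology Λ] {s : Set E}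
    (hs : s.Finite) (t : ℝ) : ((Λ : Set E) ∩ t • convexHull ℝ s).Finite :=
  (((hs.isCompact_convexHull ℝ).smul t).inter_left Λ.isClosed_of_discrete).finite
    ((isDiscrete_iff_discreteTopology.2 ‹_›).mono inter_subset_left)

lemma finite_latticeSlice_inter_closedCone [Nonempty ι] (v : ι → E) (Λ : AddSubgroup E)
    [DiscreteTopology Λ] (m : ℕ) :
    (latticeSlice (coneLattice v Λ) (coneHeight v) m ∩ closedCone (coneGenerator v)).Finite := by
  refine Finite.of_finite_image ?_ ((injOn_fst_latticeSlice v _ m).mono inter_subset_left)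
  rw [closedCone, image_fst_latticeSlice_inter_image]
  exact smul_convexHull_range v m.cast_nonneg ▸ finite_inter_smul_convexHull Λ (finite_range v) m

end Ehrhart

theorem stmt12_general {E : Type*} [AddCommGroup E] [Module ℝ E] [TopologicalSpace E]
    [IsTopologicalAddGroup E] [ContinuousSMul ℝ E] [T2Space E] (Λ : AddSubgroup E)
    [DiscreteTopology Λ] {s : Set E} (hs : s.Finite) (hne : s.Nonempty) (hsΛ : s ⊆ Λ) :
    ∃ p : ℝ[X],
      (∀ m : ℕ, p.eval (m : ℝ) = ((Λ : Set E) ∩ (m : ℝ) • convexHull ℝ s).ncard) ∧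
      ∀ m : ℕ, 1 ≤ m → p.eval (-m : ℝ) = (-1) ^ finrank ℝ (vectorSpan ℝ (convexHull ℝ s)) *
        ((Λ : Set E) ∩ (m : ℝ) • intrinsicInterior ℝ (convexHull ℝ s)).ncard := by
  have : Fintype s := hs.fintype
  have : Nonempty s := hne.to_subtype
  have hrange : range ((↑) : s → E) = s := Subtype.range_coe
  have hdim : vectorSpan ℝ (convexHull ℝ s) = vectorSpan ℝ s := by
    rw [← direction_affineSpan, affineSpan_convexHull, direction_affineSpan]
  obtain ⟨p, hclosed, hopen⟩ := exists_polynomial_ncard_latticeSlice_inter_cone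
    (span_range_coneGenerator ((↑) : s → E)) (finrank_coneSpan _) coneHeight_coneGenerator
    (coneGenerator_mem_coneLattice fun i => hsΛ i.2) (fun _ => exists_coneHeight_eq_intCast)
    (finite_latticeSlice_inter_closedCone _ Λ)
  refine ⟨p, fun m => ?_, fun m hm => ?_⟩
  · rw [hclosed, ncard_latticeSlice_inter_closedCone, hrange]
  · rw [hopen m hm, ncard_latticeSlice_inter_openCone _ _ hm, hrange, hdim]

section IntegerLattice

variable {ι : Type*}

/-- The lattice `ℤ^ι` in `ℝ^ι`. -/
def integerLattice (ι : Type*) : AddSubgroup (ι → ℝ) :=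
  (AddMonoidHom.compLeft (Int.castAddHom ℝ) ι).range

instance [Finite ι] : DiscreteTopology (integerLattice ι) :=
  (IsEmbedding.piMap fun _ : ι => Int.isClosedEmbedding_coe_real.isEmbedding)
    |>.toHomeomorph.symm.isEmbedding.discreteTopology

lemma image_intCast_subset_integerLattice (t : Set (ι → ℤ)) :
    (fun v i => (v i : ℝ)) '' t ⊆ integerLattice ι :=
  image_subset_range _ t

lemma card_setOf_intCast_mem (S : Set (ι → ℝ)) :
    Nat.card {x : ι → ℤ | (fun i => (x i : ℝ)) ∈ S} =
      ((integerLattice ι : Set (ι → ℝ)) ∩ S).ncard := by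
  have hinj : Function.Injective fun (x : ι → ℤ) (i : ι) => (x i : ℝ) :=
    Function.Injective.comp_left Int.cast_injective
  rw [Nat.card_coe_set_eq, ← ncard_image_of_injective _ hinj]
  exact congrArg ncard image_preimage_eq_range_inter

end IntegerLattice

/-- **Ehrhart reciprocity.** For an integral convex polytope `Δ ⊆ ℝⁿ` (the
convex hull of a nonempty finite set of lattice points), the lattice-point counting
function `E(m) = #(mΔ ∩ ℤⁿ)` for `m ≥ 0` extends to a polynomial in `m`, and its value at
`m = −1` equals `(−1)^{dim Δ}` times the number of lattice points in the relative interior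
of `Δ`. -/
theorem stmt12 {n : ℕ} (s : Finset (Fin n → ℤ)) (hs : s.Nonempty)
    (Δ : Set (Fin n → ℝ)) (hΔ : Δ = convexHull ℝ ↑(s.image fun v i => (v i : ℝ))) :
    ∃ p : Polynomial ℝ,
      (∀ m : ℕ, p.eval (m : ℝ) =
        Nat.card {x : Fin n → ℤ | (fun i => (x i : ℝ)) ∈ (m : ℝ) • Δ}) ∧
      p.eval (-1) = (-1 : ℝ) ^ (finrank ℝ ↥(vectorSpan ℝ Δ)) *
        Nat.card {x : Fin n → ℤ | (fun i => (x i : ℝ)) ∈ intrinsicInterior ℝ Δ} := by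
  rw [Finset.coe_image] at hΔ
  obtain ⟨p, hclosed, hopen⟩ := stmt12_general (integerLattice (Fin n)) (s.finite_toSet.image _)
    (hs.to_set.image _) (image_intCast_subset_integerLattice _)
  rw [← hΔ] at hclosed hopen
  refine ⟨p, fun m => ?_, ?_⟩
  · rw [hclosed, card_setOf_intCast_mem]
  · simpa [← card_setOf_intCast_mem] using hopen 1 le_rfl
end
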